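/- arXiv:1605.05131 — 5 statements merged into one kernel-verified Lean document; each statement's English description precedes it below -/
import Mathlib

section
/- Every n×n matrix over an arbitrary field with trace zero is the sum of four square-zero matrices. -/
/-!
A trace-zero endomorphism `T` that is not a nonzero scalar has a basis in which its matrix has zero
diagonal: if `v` and `T v` are independent, take `v` as the first basis vector and the kernel of a
linear form `f` with `f v = 1` and `f (T v) = 0` as the span of the others, and recurse on the
compression of `T` to `ker f`. At most one such `f` has a scalar compression, so a nonzero scalar
can be avoided if there is another choice of `f`; if there is none, the dimension is two and the
compression is zero because of its trace. So `T` is a strictly upper plus a strictly lower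
triangular endomorphism, and a nilpotent endomorphism is the sum of two square-zero ones because it
is odd for some grading by `ℤ/2`.

For scalars it is enough to treat the identity of `Fⁿ` when `n = 0` in `F`. In characteristic other
than two, identify the basis with `ZMod n`: the identity is the sum of the diagonal matrices with
entries `k` and `1 - k`, which anticommute with the reflections `k ↦ -k` and `k ↦ 2 - k`. In
characteristic two, `n` is even and `2 × 2` matrices suffice.
-/

open Module

/-- `a` is a sum of `k` elements of square zero. Since `0` is allowed as a summand, this also holds
for sums of fewer than `k` such elements. -/
def IsSumOfSquareZero {R : Type*} [Semiring R] (k : ℕ) (a : R) : Prop :=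
  ∃ s : Fin k → R, (∀ i, s i ^ 2 = 0) ∧ ∑ i, s i = a

namespace IsSumOfSquareZero

section Semiring

variable {R S : Type*} [Semiring R] [Semiring S] {k l : ℕ} {a b : R}

theorem zero (k : ℕ) : IsSumOfSquareZero k (0 : R) :=
  ⟨0, by simp, by simp⟩

theorem of_sq_eq_zero (ha : a ^ 2 = 0) : IsSumOfSquareZero 1 a :=
  ⟨fun _ ↦ a, fun _ ↦ ha, by simp⟩

theorem add (ha : IsSumOfSquareZero k a) (hb : IsSumOfSquareZero l b) :
    IsSumOfSquareZero (k + l) (a + b) := by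
  obtain ⟨s, hs, rfl⟩ := ha
  obtain ⟨t, ht, rfl⟩ := hb
  exact ⟨Fin.append s t, Fin.addCases (by simpa using hs) (by simpa using ht),
    by simp [Fin.sum_univ_add]⟩

theorem map {G : Type*} [FunLike G R S] [RingHomClass G R S] (φ : G) (ha : IsSumOfSquareZero k a) :
    IsSumOfSquareZero k (φ a) := by
  obtain ⟨s, hs, rfl⟩ := ha
  exact ⟨φ ∘ s, fun i ↦ by simp [← map_pow, hs], by simp⟩

theorem smul {K : Type*} [CommSemiring K] [Algebra K R] (c : K) (ha : IsSumOfSquareZero k a) :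
    IsSumOfSquareZero k (c • a) := by
  obtain ⟨s, hs, rfl⟩ := ha
  exact ⟨c • s, fun i ↦ by simp [smul_pow, hs], by simp [Finset.smul_sum]⟩

end Semiring

section Ring

variable {R : Type*} [Ring R] {p b e f : R}

/- `b` is off-diagonal in the Peirce decomposition of `p`. -/
theorem two_of_isIdempotentElem (hp : IsIdempotentElem p) (hb : p * b + b * p = b) :
    IsSumOfSquareZero 2 b := by
  have hpb : p * b = b * (1 - p) := by rw [mul_sub, mul_one, eq_sub_iff_add_eq, hb]
  have hbp : (1 - p) * b = b * p := by rw [sub_mul, one_mul, sub_eq_iff_eq_add', hb]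
  have h₁ : (b * p) ^ 2 = 0 := by
    calc (b * p) ^ 2 = b * (p * b) * p := by noncomm_ring
      _ = b * b * ((1 - p) * p) := by rw [hpb]; noncomm_ring
      _ = 0 := by rw [hp.one_sub_mul_self, mul_zero]
  have h₂ : (b * (1 - p)) ^ 2 = 0 := by
    calc (b * (1 - p)) ^ 2 = b * ((1 - p) * b) * (1 - p) := by simp only [sq, mul_assoc]
      _ = b * b * (p * (1 - p)) := by rw [hbp]; simp only [mul_assoc]
      _ = 0 := by rw [hp.mul_one_sub_self, mul_zero]
  have hsum : b * p + b * (1 - p) = b := by rw [← mul_add, add_sub_cancel, mul_one]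
  exact hsum ▸ (of_sq_eq_zero h₁).add (of_sq_eq_zero h₂)

theorem two_of_anticommute {K : Type*} [CommRing K] [Algebra K R] [Invertible (2 : K)] {s : R}
    (hs : s * s = 1) (hsb : s * b = -(b * s)) : IsSumOfSquareZero 2 b := by
  have half (x : R) : (⅟2 : K) • (x + x) = x := by
    rw [← two_smul K, smul_smul, invOf_mul_self, one_smul]
  refine two_of_isIdempotentElem (p := (⅟2 : K) • (1 + s)) ?_ ?_
  · have hsq : (1 + s) * (1 + s) = (1 + s) + (1 + s) := by
      rw [add_mul, mul_add, mul_add, hs, one_mul, mul_one, one_mul, add_comm s 1]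
    rw [IsIdempotentElem, smul_mul_smul_comm, hsq, mul_smul, half]
  · have hadd : (1 + s) * b + b * (1 + s) = b + b := by
      rw [add_mul, mul_add, hsb, one_mul, mul_one, add_add_add_comm, neg_add_cancel, add_zero]
    rw [smul_mul_assoc, mul_smul_comm, ← smul_add, hadd, half]

theorem three_one_of_two_eq_zero (h2 : (2 : R) = 0) (he : e ^ 2 = 0) (hf : f ^ 2 = 0)
    (hef : e * f + f * e = 1) : IsSumOfSquareZero 3 (1 : R) := by
  have hsq : (1 + e + f) ^ 2 = 0 := by
    calc (1 + e + f) ^ 2 = 1 + 2 * (e + f) + e ^ 2 + f ^ 2 + (e * f + f * e) := by noncomm_ring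
      _ = 2 := by rw [h2, he, hf, hef]; simp [one_add_one_eq_two, h2]
      _ = 0 := h2
  have hsum : e + f + (1 + e + f) = 1 := by
    calc e + f + (1 + e + f) = 1 + 2 * (e + f) := by noncomm_ring
      _ = 1 := by rw [h2, zero_mul, add_zero]
  exact hsum ▸ ((of_sq_eq_zero he).add (of_sq_eq_zero hf)).add (of_sq_eq_zero hsq)

end Ring

end IsSumOfSquareZero

section Scalar

theorem isSumOfSquareZero_two_mulLeft_of_involutive {ι R : Type*} [CommRing R] [Invertible (2 : R)]
    {σ : ι → ι} (hσ : Function.Involutive σ) {g : ι → R} (hg : ∀ i, g (σ i) = -g i) :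
    IsSumOfSquareZero 2 (LinearMap.mulLeft R g) := by
  refine .two_of_anticommute (K := R) (s := LinearMap.funLeft R R σ) ?_ ?_
  · exact LinearMap.ext fun x ↦ funext fun i ↦ by simp [LinearMap.funLeft_apply, hσ i]
  · exact LinearMap.ext fun x ↦ funext fun i ↦ by simp [LinearMap.funLeft_apply, hg]

theorem isSumOfSquareZero_four_one_pi_zmod {R : Type*} [CommRing R] [Invertible (2 : R)] {n : ℕ}
    (hn : (n : R) = 0) : IsSumOfSquareZero 4 (1 : End R (ZMod n → R)) := by
  let φ : ZMod n →+* R := ZMod.castHom (ringChar.dvd hn) R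
  have hsum : LinearMap.mulLeft R (fun k ↦ φ k) + LinearMap.mulLeft R (fun k ↦ 1 - φ k) = 1 :=
    LinearMap.ext fun x ↦ funext fun k ↦ by simp [← add_mul]
  rw [← hsum]
  refine .add (k := 2) (l := 2) ?_ ?_
  · exact isSumOfSquareZero_two_mulLeft_of_involutive neg_involutive (map_neg φ)
  · refine isSumOfSquareZero_two_mulLeft_of_involutive (sub_sub_cancel 2) fun k ↦ ?_
    simp only [map_sub, map_ofNat]
    ring

theorem isSumOfSquareZero_three_one_prod {R M : Type*} [Ring R] [AddCommGroup M] [Module R M]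
    (h2 : (2 : R) = 0) : IsSumOfSquareZero 3 (1 : End R (M × M)) := by
  have h2M (x : M) : x + x = 0 := by rw [← two_smul R, h2, zero_smul]
  refine .three_one_of_two_eq_zero (e := LinearMap.inl R M M ∘ₗ LinearMap.snd R M M)
    (f := LinearMap.inr R M M ∘ₗ LinearMap.fst R M M) ?_ ?_ ?_ ?_
  · rw [← one_add_one_eq_two]
    exact LinearMap.ext fun x ↦ Prod.ext (h2M x.1) (h2M x.2)
  all_goals exact LinearMap.ext fun x ↦ Prod.ext (by simp [sq]) (by simp [sq])

theorem isSumOfSquareZero_four_one {F V : Type*} [Field F] [AddCommGroup V] [Module F V]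
    [FiniteDimensional F V] (hV : (finrank F V : F) = 0) :
    IsSumOfSquareZero 4 (1 : End F V) := by
  by_cases h2 : (2 : F) = 0
  · have : CharP F 2 := CharTwo.of_one_ne_zero_of_two_eq_zero one_ne_zero h2
    obtain ⟨m, hm⟩ := (CharP.cast_eq_zero_iff F 2 _).1 hV
    let e : ((Fin m → F) × (Fin m → F)) ≃ₗ[F] V := .ofFinrankEq _ _ (by simp [hm, two_mul])
    have h : IsSumOfSquareZero 3 (1 : End F V) := by
      simpa using (isSumOfSquareZero_three_one_prod h2).map (e.conjAlgEquiv F)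
    simpa using h.add (.zero 1)
  · rcases subsingleton_or_nontrivial V with _ | _
    · exact Subsingleton.elim (0 : End F V) 1 ▸ .zero 4
    have : NeZero (finrank F V) := ⟨finrank_pos.ne'⟩
    have : Invertible (2 : F) := invertibleOfNonzero h2
    let e : (ZMod (finrank F V) → F) ≃ₗ[F] V := .ofFinrankEq _ _ (by simp [ZMod.card])
    simpa using (isSumOfSquareZero_four_one_pi_zmod hV).map (e.conjAlgEquiv F)

end Scalar

section Nilpotent

section Lattice

variable {α : Type*} [Lattice α] [BoundedOrder α] [IsModularLattice α] [ComplementedLattice α]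
  {a b x y : α}

theorem exists_ge_disjoint_sup_eq (hab : Disjoint a b) (ha : a ≤ x) (hb : b ≤ x) :
    ∃ c, a ≤ c ∧ Disjoint c b ∧ c ⊔ b = x := by
  obtain ⟨c, hinf, hsup⟩ :=
    IsModularLattice.exists_inf_eq_and_sup_eq (le_sup_left : a ≤ a ⊔ b) (sup_le ha hb)
  have hac : a ≤ c := hinf ▸ inf_le_right
  refine ⟨c, hac, ?_, ?_⟩
  · rw [disjoint_iff_inf_le]
    calc c ⊓ b ≤ (a ⊔ b) ⊓ c ⊓ b :=
          le_inf (le_inf (inf_le_right.trans le_sup_right) inf_le_left) inf_le_right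
      _ ≤ ⊥ := by rw [hinf]; exact hab.le_bot
  · rw [← hsup, sup_comm a b, sup_assoc, sup_eq_right.2 hac, sup_comm]

theorem exists_between_disjoint_sup_eq (hab : Disjoint a b) (ha : a ≤ x) (hb : b ≤ y) :
    ∃ a' b', a ≤ a' ∧ a' ≤ x ∧ b ≤ b' ∧ b' ≤ y ∧ Disjoint a' b' ∧ a' ⊔ b' = x ⊔ y := by
  obtain ⟨a', haa', hdisj, hx⟩ :=
    exists_ge_disjoint_sup_eq (hab.mono_right inf_le_left : Disjoint a (b ⊓ x)) ha inf_le_right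
  have ha'x : a' ≤ x := hx ▸ le_sup_left
  have hba' : Disjoint b (a' ⊓ y) := by
    rw [disjoint_iff_inf_le]
    exact le_trans (le_inf (inf_le_right.trans inf_le_left)
      (le_inf inf_le_left (inf_le_right.trans (inf_le_left.trans ha'x)))) hdisj.le_bot
  obtain ⟨b', hbb', hdisj', hy⟩ := exists_ge_disjoint_sup_eq hba' hb inf_le_right
  have hb'y : b' ≤ y := hy ▸ le_sup_left
  refine ⟨a', b', haa', ha'x, hbb', hb'y, ?_, le_antisymm (sup_le_sup ha'x hb'y) ?_⟩
  · rw [disjoint_iff_inf_le]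
    exact le_trans (le_inf inf_le_right (inf_le_inf_left a' hb'y)) hdisj'.le_bot
  · have hy' : y ≤ a' ⊔ b' := hy ▸ sup_le le_sup_right (inf_le_left.trans le_sup_left)
    have hx' : x ≤ a' ⊔ b' :=
      hx ▸ sup_le le_sup_left (inf_le_left.trans (hbb'.trans le_sup_right))
    exact sup_le hx' hy'

end Lattice

variable {R M : Type*} [Ring R] [AddCommGroup M] [Module R M] {T : End R M}
  {V V₀ V₁ W₀ W₁ : Submodule R M}

/-- A `ℤ/2`-grading `V = V₀ ⊕ V₁` of the submodule `V` for which `T` is odd. -/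
structure IsOddGrading (T : End R M) (V V₀ V₁ : Submodule R M) : Prop where
  disjoint : Disjoint V₀ V₁
  sup_eq : V₀ ⊔ V₁ = V
  map_le₀ : V₀.map T ≤ V₁
  map_le₁ : V₁.map T ≤ V₀

namespace IsOddGrading

theorem isSumOfSquareZero_two (h : IsOddGrading T ⊤ V₀ V₁) : IsSumOfSquareZero 2 T := by
  have hc : IsCompl V₀ V₁ := ⟨h.disjoint, codisjoint_iff.2 h.sup_eq⟩
  refine .two_of_isIdempotentElem (p := V₀.projection V₁ hc)
    (Submodule.isIdempotentElem_projection hc) (LinearMap.ext fun x ↦ ?_)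
  obtain ⟨y, z, hy, hz, rfl⟩ := Submodule.codisjoint_iff_exists_add_eq.1 hc.codisjoint x
  have hTy : T y ∈ V₁ := h.map_le₀ ⟨y, hy, rfl⟩
  have hTz : T z ∈ V₀ := h.map_le₁ ⟨z, hz, rfl⟩
  simp [Submodule.projection_apply_of_mem_left hc, Submodule.projection_apply_of_mem_right hc, *,
    add_comm]

/- The graded pieces are enlarged between `Wᵢ` and the preimage of `W₁₋ᵢ` in `V`. -/
theorem exists_of_map [IsSemisimpleModule R M] (hV : V.map T ≤ V)
    (hW : IsOddGrading T (V.map T) W₀ W₁) : ∃ V₀ V₁, IsOddGrading T V V₀ V₁ := by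
  have hW₀ : W₀ ≤ V ⊓ W₁.comap T :=
    le_inf ((hW.sup_eq ▸ le_sup_left).trans hV) (Submodule.map_le_iff_le_comap.1 hW.map_le₀)
  have hW₁ : W₁ ≤ V ⊓ W₀.comap T :=
    le_inf ((hW.sup_eq ▸ le_sup_right).trans hV) (Submodule.map_le_iff_le_comap.1 hW.map_le₁)
  obtain ⟨V₀, V₁, hWV₀, hV₀, hWV₁, hV₁, hdisj, hsup⟩ :=
    exists_between_disjoint_sup_eq hW.disjoint hW₀ hW₁
  have hcover : V ⊓ W₁.comap T ⊔ V ⊓ W₀.comap T = V := by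
    refine le_antisymm (sup_le inf_le_left inf_le_left) fun x hx ↦ ?_
    obtain ⟨w₀, hw₀, w₁, hw₁, hTx⟩ :=
      Submodule.mem_sup.1 (hW.sup_eq ▸ ⟨x, hx, rfl⟩ : T x ∈ W₀ ⊔ W₁)
    obtain ⟨y, hy, rfl⟩ : w₁ ∈ V.map T := hW.sup_eq ▸ Submodule.mem_sup_right hw₁
    have hxy : T (x - y) = w₀ := by rw [map_sub, ← hTx, add_sub_cancel_right]
    exact Submodule.mem_sup.2
      ⟨y, ⟨hy, hw₁⟩, x - y, ⟨V.sub_mem hx hy, by simpa [hxy] using hw₀⟩, add_sub_cancel y x⟩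
  exact ⟨V₀, V₁, hdisj, hsup.trans hcover,
    (Submodule.map_le_iff_le_comap.2 (hV₀.trans inf_le_right)).trans hWV₁,
    (Submodule.map_le_iff_le_comap.2 (hV₁.trans inf_le_right)).trans hWV₀⟩

theorem exists_of_map_pow_eq_bot [IsSemisimpleModule R M] (hV : V.map T ≤ V) {n : ℕ}
    (hn : V.map (T ^ n) = ⊥) : ∃ V₀ V₁, IsOddGrading T V V₀ V₁ := by
  induction n generalizing V with
  | zero =>
    obtain rfl : V = ⊥ := by simpa [End.one_eq_id] using hn
    exact ⟨⊥, ⊥, disjoint_bot_left, sup_idem ⊥, by simp, by simp⟩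
  | succ n ih =>
    obtain ⟨W₀, W₁, hW⟩ := ih (Submodule.map_mono hV)
      (by rwa [← Submodule.map_comp, ← End.mul_eq_comp, ← pow_succ])
    exact exists_of_map hV hW

end IsOddGrading

theorem isSumOfSquareZero_two_of_isNilpotent [IsSemisimpleModule R M] (hT : IsNilpotent T) :
    IsSumOfSquareZero 2 T := by
  obtain ⟨n, hn⟩ := hT
  obtain ⟨V₀, V₁, h⟩ := IsOddGrading.exists_of_map_pow_eq_bot (T := T) le_top
    (by rw [hn, Submodule.map_zero])
  exact h.isSumOfSquareZero_two

end Nilpotent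

section Triangular

open scoped Matrix

variable {ι R : Type*} [Fintype ι] [LinearOrder ι] [CommRing R]

theorem isNilpotent_of_isUpperTriangular {A : Matrix ι ι R} (hA : A.IsUpperTriangular)
    (hdiag : A.diag = 0) : IsNilpotent A := by
  have hchar : A.charpoly = Polynomial.X ^ Fintype.card ι := by
    simp [A.charpoly_of_isUpperTriangular hA, fun i ↦ show A i i = 0 from congrFun hdiag i]
  exact ⟨Fintype.card ι, by simpa [hchar] using A.aeval_self_charpoly⟩

theorem exists_isNilpotent_add_eq_of_diag_eq_zero {A : Matrix ι ι R} (hA : A.diag = 0) :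
    ∃ U L : Matrix ι ι R, IsNilpotent U ∧ IsNilpotent L ∧ U + L = A := by
  let U : Matrix ι ι R := .of fun i j ↦ if i < j then A i j else 0
  let L : Matrix ι ι R := .of fun i j ↦ if j < i then A i j else 0
  have hU : IsNilpotent U := isNilpotent_of_isUpperTriangular
    (fun i j hij ↦ if_neg (lt_asymm hij)) (by ext; simp [U])
  have hL : IsNilpotent Lᵀ := isNilpotent_of_isUpperTriangular
    (fun i j hij ↦ if_neg (lt_asymm hij)) (by ext; simp [L])
  refine ⟨U, L, hU, Matrix.isNilpotent_transpose_iff.1 hL, Matrix.ext fun i j ↦ ?_⟩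
  rcases lt_trichotomy i j with hij | rfl | hij
  · simp [U, L, hij, hij.not_gt]
  · simpa [U, L] using (congrFun hA i).symm
  · simp [U, L, hij, hij.not_gt]

end Triangular

section Compression

variable {R M : Type*} [CommRing R] [AddCommGroup M] [Module R M] {f g : Dual R M} {v : M}

/-- The projection of `M` onto the kernel of the linear form `f` along a vector `v` with
`f v = 1`. -/
def kerProjection (hv : f v = 1) : M →ₗ[R] LinearMap.ker f :=
  (LinearMap.id - f.smulRight v).codRestrict _ fun x ↦ by simp [hv]

@[simp]
theorem coe_kerProjection (hv : f v = 1) (x : M) : (kerProjection hv x : M) = x - f x • v := rfl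

/-- The compression of `T` to the kernel of `f` along a vector `v` with `f v = 1`: the lower right
block of `T` for the decomposition of the module into the span of `v` and the kernel of `f`. -/
def kerCompression (T : End R M) (hv : f v = 1) : End R (LinearMap.ker f) :=
  kerProjection hv ∘ₗ T ∘ₗ (LinearMap.ker f).subtype

/-- The basis of `M` that consists of a vector `v` with `f v = 1`, followed by a basis of the
kernel of `f`. -/
noncomputable def consKerBasis {n : ℕ} (hv : f v = 1) (b : Basis (Fin n) R (LinearMap.ker f)) :
    Basis (Fin (n + 1)) R M :=
  .mkFinCons v b (fun c x hx hcx ↦ by simpa [hv, LinearMap.mem_ker.1 hx] using congrArg f hcx)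
    fun z ↦ ⟨-f z, by simp [hv]⟩

theorem coe_consKerBasis {n : ℕ} (hv : f v = 1) (b : Basis (Fin n) R (LinearMap.ker f)) :
    ⇑(consKerBasis hv b) = Fin.cons v ((↑) ∘ b) := Basis.coe_mkFinCons ..

theorem repr_consKerBasis {n : ℕ} (hv : f v = 1) (b : Basis (Fin n) R (LinearMap.ker f)) (x : M) :
    ⇑((consKerBasis hv b).repr x) = Fin.cons (f x) (b.repr (kerProjection hv x)) := by
  have hx : x = ∑ i, (Fin.cons (f x) (b.repr (kerProjection hv x)) : Fin (n + 1) → R) i •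
      consKerBasis hv b i := by
    have hsum := congrArg Subtype.val (b.sum_repr (kerProjection hv x))
    rw [Submodule.coe_sum, coe_kerProjection] at hsum
    simpa [Fin.sum_univ_succ, coe_consKerBasis, -coe_kerProjection, ← sub_eq_iff_eq_add']
      using hsum.symm
  conv_lhs => rw [hx]
  exact Basis.repr_sum_self _ _

theorem diag_toMatrix_consKerBasis {n : ℕ} (T : End R M) (hv : f v = 1)
    (b : Basis (Fin n) R (LinearMap.ker f)) :
    (LinearMap.toMatrix (consKerBasis hv b) (consKerBasis hv b) T).diag =
      Fin.cons (f (T v)) (LinearMap.toMatrix b b (kerCompression T hv)).diag := by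
  funext i
  refine Fin.cases ?_ (fun i ↦ ?_) i
  · simp [LinearMap.toMatrix_apply, repr_consKerBasis, coe_consKerBasis]
  · simp [LinearMap.toMatrix_apply, repr_consKerBasis, coe_consKerBasis, kerCompression]

theorem trace_eq_add_trace_kerCompression [Module.Free R (LinearMap.ker f)]
    [Module.Finite R (LinearMap.ker f)] (T : End R M) (hv : f v = 1) :
    LinearMap.trace R M T = f (T v) + LinearMap.trace R _ (kerCompression T hv) := by
  nontriviality R
  let b := finBasis R (LinearMap.ker f)
  simp [LinearMap.trace_eq_matrix_trace R (consKerBasis hv b),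
    LinearMap.trace_eq_matrix_trace R b, Matrix.trace, diag_toMatrix_consKerBasis,
    Fin.sum_univ_succ, -Matrix.diag_apply]

theorem exists_eq_of_kerCompression_eq_smul_one {T : End R M} {hv : f v = 1} {a : R}
    (h : kerCompression T hv = a • 1) (x : M) : ∃ c : R, T x = f x • T v + a • x + c • v := by
  have hx : T (x - f x • v) - f (T (x - f x • v)) • v = a • (x - f x • v) :=
    congrArg Subtype.val (LinearMap.congr_fun h (kerProjection hv x))
  refine ⟨f (T (x - f x • v)) - a * f x, ?_⟩
  rw [map_sub, map_smul] at hx ⊢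
  linear_combination (norm := module) hx

theorem eq_of_kerCompression_eq_smul_one {T : End R M} (hli : LinearIndependent R ![v, T v])
    {hf : f v = 1} {hg : g v = 1} (hfg : f (T v) = g (T v)) {a b : R}
    (ha : kerCompression T hf = a • 1) (hb : kerCompression T hg = b • 1) : f = g := by
  have hrel (x : M) : ∃ c : R, c • v + (f x - g x) • T v = (b - a) • x := by
    obtain ⟨c, hc⟩ := exists_eq_of_kerCompression_eq_smul_one ha x
    obtain ⟨d, hd⟩ := exists_eq_of_kerCompression_eq_smul_one hb x
    exact ⟨c - d, by linear_combination (norm := module) hd - hc⟩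
  have hab : b - a = 0 := by
    obtain ⟨c, hc⟩ := hrel (T v)
    rw [hfg, sub_self, zero_smul, add_zero] at hc
    exact sub_eq_zero.2 (sub_eq_zero.1 (LinearIndependent.pair_iff.1 hli c (a - b)
      (by linear_combination (norm := module) hc)).2).symm
  refine LinearMap.ext fun x ↦ ?_
  obtain ⟨c, hc⟩ := hrel x
  rw [hab, zero_smul] at hc
  exact sub_eq_zero.1 (LinearIndependent.pair_iff.1 hli _ _ hc).2

end Compression

section ZeroDiagonal

variable {F V : Type*} [Field F] [AddCommGroup V] [Module F V]

theorem exists_dual_eq_one_eq_zero {v w : V} (h : LinearIndependent F ![v, w]) :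
    ∃ f : Dual F V, f v = 1 ∧ f w = 0 := by
  have hv : v ∉ F ∙ w := by
    rw [Submodule.mem_span_singleton]
    rintro ⟨a, ha⟩
    simpa using (LinearIndependent.pair_iff.1 h (-1) a (by simp [ha])).1
  obtain ⟨f, hf, hfv⟩ := LinearMap.exists_extend_of_notMem (0 : (F ∙ w) →ₗ[F] F) hv 1
  exact ⟨f, hfv, LinearMap.congr_fun hf ⟨w, Submodule.mem_span_singleton_self w⟩⟩

variable [FiniteDimensional F V] {T : End F V}

theorem exists_kerCompression_eq_zero_of_eq_smul_one (hT : LinearMap.trace F V T = 0) {v : V}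
    (hli : LinearIndependent F ![v, T v]) :
    ∃ (f : Dual F V) (hv : f v = 1), f (T v) = 0 ∧
      ∀ a : F, kerCompression T hv = a • 1 → kerCompression T hv = 0 := by
  obtain ⟨f, hfv, hfT⟩ := exists_dual_eq_one_eq_zero hli
  rcases eq_or_ne (Submodule.span F (Set.range ![v, T v])) ⊤ with htop | htop
  · refine ⟨f, hfv, hfT, fun a ha ↦ ?_⟩
    have hV : finrank F V = 2 := by
      rw [← finrank_top, ← htop, finrank_span_eq_card hli, Fintype.card_fin]
    have hf : f ≠ 0 := fun h ↦ by simp [h] at hfv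
    have hker : finrank F (LinearMap.ker f) = 1 := by
      have hadd := Dual.finrank_ker_add_one_of_ne_zero hf
      lia
    have htrace := trace_eq_add_trace_kerCompression T hfv
    have ha0 : a = 0 := by simpa [hT, hfT, ha, hker] using htrace.symm
    rw [ha, ha0, zero_smul]
  · by_cases hscalar : ∃ a : F, kerCompression T hfv = a • 1
    · obtain ⟨a, ha⟩ := hscalar
      obtain ⟨h, hh0, hh⟩ := Submodule.exists_le_ker_of_lt_top _ htop.lt_top
      have hhv : h v = 0 := hh (Submodule.subset_span ⟨0, rfl⟩)
      have hhT : h (T v) = 0 := hh (Submodule.subset_span ⟨1, rfl⟩)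
      have hfhv : (f + h) v = 1 := by simp [hfv, hhv]
      refine ⟨f + h, hfhv, by simp [hfT, hhT], fun b hb ↦ absurd ?_ hh0⟩
      exact left_eq_add.1 (eq_of_kerCompression_eq_smul_one hli (by simp [hhT]) ha hb)
    · exact ⟨f, hfv, hfT, fun a ha ↦ absurd ⟨a, ha⟩ hscalar⟩

theorem exists_basis_diag_toMatrix_eq_zero {n : ℕ} (hn : finrank F V = n)
    (hT : LinearMap.trace F V T = 0) (hscalar : ∀ a : F, T = a • 1 → T = 0) :
    ∃ b : Basis (Fin n) F V, (LinearMap.toMatrix b b T).diag = 0 := by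
  induction n generalizing V with
  | zero => exact ⟨finBasisOfFinrankEq F V hn, Subsingleton.elim _ _⟩
  | succ n ih =>
    rcases eq_or_ne T 0 with rfl | hT0
    · exact ⟨finBasisOfFinrankEq F V hn, by simp⟩
    obtain ⟨v, hli⟩ : ∃ v, LinearIndependent F ![v, T v] := by
      by_contra! h
      obtain ⟨a, ha⟩ := LinearMap.exists_eq_smul_id_of_forall_notLinearIndependent h
      exact hT0 (hscalar a ha)
    obtain ⟨f, hfv, hfT, hf⟩ := exists_kerCompression_eq_zero_of_eq_smul_one hT hli
    have hf0 : f ≠ 0 := fun h ↦ by simp [h] at hfv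
    have hker : finrank F (LinearMap.ker f) = n := by
      have hadd := Dual.finrank_ker_add_one_of_ne_zero hf0
      lia
    have htrace : LinearMap.trace F _ (kerCompression T hfv) = 0 := by
      simpa [hT, hfT] using (trace_eq_add_trace_kerCompression T hfv).symm
    obtain ⟨b, hb⟩ := ih hker htrace hf
    refine ⟨consKerBasis hfv b, ?_⟩
    rw [diag_toMatrix_consKerBasis, hfT, hb]
    exact Fin.cons_self_tail (0 : Fin (n + 1) → F)

theorem exists_isNilpotent_add_eq_of_trace_eq_zero (hT : LinearMap.trace F V T = 0)
    (hscalar : ∀ a : F, T = a • 1 → T = 0) :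
    ∃ N₁ N₂ : End F V, IsNilpotent N₁ ∧ IsNilpotent N₂ ∧ N₁ + N₂ = T := by
  obtain ⟨b, hb⟩ := exists_basis_diag_toMatrix_eq_zero rfl hT hscalar
  obtain ⟨U, L, hU, hL, hUL⟩ := exists_isNilpotent_add_eq_of_diag_eq_zero hb
  let φ := Matrix.toLinAlgEquiv b
  exact ⟨φ U, φ L, hU.map φ, hL.map φ, by
    rw [← map_add, hUL]; exact Matrix.toLin_toMatrix b b T⟩

end ZeroDiagonal

theorem trace_zero_sum_four_square_zero_general {F V : Type*} [Field F] [AddCommGroup V]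
    [Module F V] [FiniteDimensional F V] {T : End F V} (hT : LinearMap.trace F V T = 0) :
    IsSumOfSquareZero 4 T := by
  by_cases hscalar : ∀ a : F, T = a • 1 → T = 0
  · obtain ⟨N₁, N₂, h₁, h₂, rfl⟩ := exists_isNilpotent_add_eq_of_trace_eq_zero hT hscalar
    exact (isSumOfSquareZero_two_of_isNilpotent h₁).add (isSumOfSquareZero_two_of_isNilpotent h₂)
  · push Not at hscalar
    obtain ⟨a, rfl, ha⟩ := hscalar
    have ha0 : a ≠ 0 := by rintro rfl; simp at ha
    refine .smul a (isSumOfSquareZero_four_one ?_)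
    simpa [ha0] using hT

/-- Every square matrix with trace zero over a field is the sum of four
square-zero matrices. -/
theorem trace_zero_sum_four_square_zero (F : Type*) [Field F] (n : ℕ)
    (A : Matrix (Fin n) (Fin n) F) (hA : A.trace = 0) :
    ∃ B C D E : Matrix (Fin n) (Fin n) F,
      B ^ 2 = 0 ∧ C ^ 2 = 0 ∧ D ^ 2 = 0 ∧ E ^ 2 = 0 ∧ A = B + C + D + E := by
  obtain ⟨s, hs, hsum⟩ := (trace_zero_sum_four_square_zero_general
    ((Matrix.trace_toLin'_eq A).trans hA)).map LinearMap.toMatrixAlgEquiv'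
  exact ⟨s 0, s 1, s 2, s 3, hs 0, hs 1, hs 2, hs 3, by
    rw [← Fin.sum_univ_four, hsum]; exact (LinearMap.toMatrix'_toLin' A).symm⟩
end

section
/- For every n×n matrix A over an arbitrary field with trace zero, the 2n×2n block-diagonal matrix A ⊕ 0_n (with A in the top-left block and zeros elsewhere) is the sum of three square-zero matrices. -/
/-!
By Fitting's lemma `A` splits into a nilpotent and an invertible part. If `f` is nilpotent, there is
a decomposition `V = I ⊕ J` with `f I ⊆ J` and `f J ⊆ I`, built from the ranges of the powers of
`f`, so `f` is the sum of its two off-diagonal blocks.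

If `f = a + b` is invertible, then `f ⊕ 0` is similar to `[a b; a b]`. There are two ways to split
this block matrix. If `a` and `b` are nilpotent, it is the sum of the nilpotent `[a b; 0 b]` and the
square-zero `[0 0; a 0]`. If `b = -(t a t⁻¹)`, then its diagonal agrees with that of the square-zero
matrix `[a; t a] [1, -t⁻¹]`, and the two off-diagonal blocks can be corrected independently.
A non-scalar `f` of trace zero is of the first kind, because it is similar to a matrix with zero
diagonal, and a scalar one is of the second kind, with `a` diagonal and `t` a cyclic shift.
-/

open Module

section SumPredicates

variable {R S : Type*} [Ring R] [Ring S]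

/-- `x` is a sum of two nilpotent elements. -/
def IsSumTwoNilpotent (x : R) : Prop :=
  ∃ a b : R, IsNilpotent a ∧ IsNilpotent b ∧ x = a + b

/-- `x` is a sum of two elements whose square is zero. -/
def IsSumTwoSquareZero (x : R) : Prop :=
  ∃ a b : R, a ^ 2 = 0 ∧ b ^ 2 = 0 ∧ x = a + b

/-- `x` is a sum of three elements whose square is zero. -/
def IsSumThreeSquareZero (x : R) : Prop :=
  ∃ a b c : R, a ^ 2 = 0 ∧ b ^ 2 = 0 ∧ c ^ 2 = 0 ∧ x = a + b + c

theorem IsSumTwoNilpotent.zero : IsSumTwoNilpotent (0 : R) :=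
  ⟨0, 0, .zero, .zero, (add_zero 0).symm⟩

theorem IsSumTwoNilpotent.map (φ : R →+* S) {x : R} (hx : IsSumTwoNilpotent x) :
    IsSumTwoNilpotent (φ x) := by
  obtain ⟨a, b, ha, hb, rfl⟩ := hx
  exact ⟨φ a, φ b, ha.map φ, hb.map φ, map_add φ a b⟩

theorem IsSumTwoSquareZero.map (φ : R →+* S) {x : R} (hx : IsSumTwoSquareZero x) :
    IsSumTwoSquareZero (φ x) := by
  obtain ⟨a, b, ha, hb, rfl⟩ := hx
  exact ⟨φ a, φ b, by rw [← map_pow, ha, map_zero], by rw [← map_pow, hb, map_zero], map_add φ a b⟩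

theorem IsSumTwoSquareZero.add {x y : R} (hx : IsSumTwoSquareZero x) (hy : y ^ 2 = 0) :
    IsSumThreeSquareZero (x + y) := by
  obtain ⟨a, b, ha, hb, rfl⟩ := hx
  exact ⟨a, b, y, ha, hb, hy, rfl⟩

namespace IsSumThreeSquareZero

theorem map (φ : R →+* S) {x : R} (hx : IsSumThreeSquareZero x) :
    IsSumThreeSquareZero (φ x) := by
  obtain ⟨a, b, c, ha, hb, hc, rfl⟩ := hx
  refine ⟨φ a, φ b, φ c, ?_, ?_, ?_, by simp only [map_add]⟩
  · rw [← map_pow, ha, map_zero]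
  · rw [← map_pow, hb, map_zero]
  · rw [← map_pow, hc, map_zero]

theorem prodMk {x : R} {y : S} (hx : IsSumThreeSquareZero x) (hy : IsSumThreeSquareZero y) :
    IsSumThreeSquareZero (x, y) := by
  obtain ⟨a, b, c, ha, hb, hc, rfl⟩ := hx
  obtain ⟨a', b', c', ha', hb', hc', rfl⟩ := hy
  exact ⟨(a, a'), (b, b'), (c, c'), Prod.ext ha ha', Prod.ext hb hb', Prod.ext hc hc', rfl⟩

theorem conj {p q : R} (hqp : q * p = 1) {x : R} (hx : IsSumThreeSquareZero x) :
    IsSumThreeSquareZero (p * x * q) := by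
  obtain ⟨a, b, c, ha, hb, hc, rfl⟩ := hx
  have conj_sq {y : R} (hy : y ^ 2 = 0) : (p * y * q) ^ 2 = 0 := by
    calc (p * y * q) ^ 2 = p * (y * (q * p) * y) * q := by noncomm_ring
      _ = 0 := by rw [hqp, mul_one, ← sq, hy, mul_zero, zero_mul]
  exact ⟨_, _, _, conj_sq ha, conj_sq hb, conj_sq hc, by simp only [mul_add, add_mul]⟩

end IsSumThreeSquareZero

end SumPredicates

section BlockEndomorphisms

variable {R M N : Type*} [Ring R] [AddCommGroup M] [Module R M] [AddCommGroup N] [Module R N]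

/-- The endomorphism of `M × N` with block matrix `[a b; c d]`. -/
def blockEnd (a : End R M) (b : N →ₗ[R] M) (c : M →ₗ[R] N) (d : End R N) : End R (M × N) :=
  (a.coprod b).prod (c.coprod d)

@[simp]
theorem blockEnd_apply (a : End R M) (b : N →ₗ[R] M) (c : M →ₗ[R] N) (d : End R N) (x : M × N) :
    blockEnd a b c d x = (a x.1 + b x.2, c x.1 + d x.2) := rfl

theorem blockEnd_add (a a' : End R M) (b b' : N →ₗ[R] M) (c c' : M →ₗ[R] N) (d d' : End R N) :
    blockEnd a b c d + blockEnd a' b' c' d' = blockEnd (a + a') (b + b') (c + c') (d + d') := by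
  ext <;> simp

theorem blockEnd_mul (a a' : End R M) (b b' : N →ₗ[R] M) (c c' : M →ₗ[R] N) (d d' : End R N) :
    blockEnd a b c d * blockEnd a' b' c' d' =
      blockEnd (a * a' + b ∘ₗ c') (a ∘ₗ b' + b ∘ₗ d') (c ∘ₗ a' + d ∘ₗ c') (c ∘ₗ b' + d * d') := by
  ext <;> simp

theorem blockEnd_zero : blockEnd 0 0 0 0 = (0 : End R (M × N)) := by
  ext <;> simp

theorem blockEnd_one : blockEnd 1 0 0 1 = (1 : End R (M × N)) := by
  ext <;> simp

theorem blockEnd_diagonal (a : End R M) (d : End R N) : blockEnd a 0 0 d = a.prodMap d := by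
  ext <;> simp

theorem blockEnd_upper_sq (b : N →ₗ[R] M) : blockEnd 0 b 0 0 ^ 2 = 0 := by
  simp [sq, blockEnd_mul, blockEnd_zero]

theorem blockEnd_lower_sq (c : M →ₗ[R] N) : blockEnd 0 0 c 0 ^ 2 = 0 := by
  simp [sq, blockEnd_mul, blockEnd_zero]

theorem isNilpotent_of_ker_le_range {P : Type*} [AddCommGroup P] [Module R P] {f : End R N}
    {a : End R M} {d : End R P} (i : M →ₗ[R] N) (p : N →ₗ[R] P)
    (hip : LinearMap.ker p ≤ LinearMap.range i) (hi : f ∘ₗ i = i ∘ₗ a) (hp : d ∘ₗ p = p ∘ₗ f)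
    (ha : IsNilpotent a) (hd : IsNilpotent d) : IsNilpotent f := by
  obtain ⟨k, hk⟩ := ha
  obtain ⟨l, hl⟩ := hd
  refine ⟨k + l, LinearMap.ext fun x => ?_⟩
  have hker : p ((f ^ l) x) = 0 := by
    simpa [hl] using (LinearMap.congr_fun (Module.End.commute_pow_left_of_commute hp l) x).symm
  obtain ⟨y, hy⟩ := hip hker
  rw [pow_add, Module.End.mul_apply, ← hy]
  simpa [hk] using LinearMap.congr_fun (Module.End.commute_pow_left_of_commute hi k) y

theorem isNilpotent_blockEnd_upper {a : End R M} {d : End R N} (ha : IsNilpotent a)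
    (hd : IsNilpotent d) (b : N →ₗ[R] M) : IsNilpotent (blockEnd a b 0 d) :=
  isNilpotent_of_ker_le_range (LinearMap.inl R M N) (LinearMap.snd R M N)
    (LinearMap.range_inl R M N).ge (by ext <;> simp) (by ext <;> simp) ha hd

theorem isNilpotent_blockEnd_lower {a : End R M} {d : End R N} (ha : IsNilpotent a)
    (hd : IsNilpotent d) (c : M →ₗ[R] N) : IsNilpotent (blockEnd a 0 c d) :=
  isNilpotent_of_ker_le_range (LinearMap.inr R M N) (LinearMap.fst R M N)
    (LinearMap.range_inr R M N).ge (by ext <;> simp) (by ext <;> simp) hd ha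

theorem IsSumTwoNilpotent.blockEnd {a : End R M} {d : End R N} (ha : IsSumTwoNilpotent a)
    (hd : IsSumTwoNilpotent d) (b : N →ₗ[R] M) (c : M →ₗ[R] N) :
    IsSumTwoNilpotent (blockEnd a b c d) := by
  obtain ⟨a₁, a₂, ha₁, ha₂, rfl⟩ := ha
  obtain ⟨d₁, d₂, hd₁, hd₂, rfl⟩ := hd
  exact ⟨_, _, isNilpotent_blockEnd_upper ha₁ hd₁ b, isNilpotent_blockEnd_lower ha₂ hd₂ c,
    by rw [blockEnd_add, add_zero, zero_add]⟩

end BlockEndomorphisms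

section Compression

variable {R M : Type*} [Ring R] [AddCommGroup M] [Module R M] {U W : Submodule R M}

/-- The compression of `f` to `U` along a complement `W`, that is, the `U`-`U` block of `f` with
respect to `M = U ⊕ W`. -/
noncomputable def compression (h : IsCompl U W) (f : End R M) : End R U :=
  U.projectionOnto W h ∘ₗ f ∘ₗ U.subtype

theorem compression_eq_zero (h : IsCompl U W) {f : End R M} (hf : U.map f ≤ W) :
    compression h f = 0 :=
  LinearMap.ext fun x =>
    (U.projectionOnto_apply_eq_zero_iff h).mpr (hf (Submodule.mem_map_of_mem x.2))

theorem sub_compression_mem (h : IsCompl U W) (f : End R M) (x : U) :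
    f x - compression h f x ∈ W :=
  Submodule.sub_projection_mem h (f x)

theorem conj_blockEnd_compression (h : IsCompl U W) (f : End R M) :
    (U.prodEquivOfIsCompl W h).conjRingEquiv
      (blockEnd (compression h f) (U.projectionOnto W h ∘ₗ f ∘ₗ W.subtype)
        (W.projectionOnto U h.symm ∘ₗ f ∘ₗ U.subtype) (compression h.symm f)) = f := by
  refine LinearMap.ext fun x => ?_
  obtain ⟨⟨u, w⟩, rfl⟩ := (U.prodEquivOfIsCompl W h).surjective x
  rw [LinearEquiv.conjRingEquiv_apply_apply, LinearEquiv.symm_apply_apply]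
  have hu := Submodule.projection_add_projection_eq_self h (f u)
  have hw := Submodule.projection_add_projection_eq_self h (f w)
  simp only [Submodule.projection_apply] at hu hw
  simp only [blockEnd_apply, compression, LinearMap.comp_apply, Submodule.subtype_apply,
    Submodule.coe_prodEquivOfIsCompl', Submodule.coe_add, map_add]
  linear_combination (norm := module) hu + hw

theorem IsSumTwoNilpotent.of_compression (h : IsCompl U W) {f : End R M}
    (hU : IsSumTwoNilpotent (compression h f)) (hW : IsSumTwoNilpotent (compression h.symm f)) :
    IsSumTwoNilpotent f := by
  rw [← conj_blockEnd_compression h f]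
  exact (hU.blockEnd hW _ _).map (U.prodEquivOfIsCompl W h).conjRingEquiv.toRingHom

theorem isSumTwoSquareZero_of_map_le (h : IsCompl U W) {f : End R M} (hU : U.map f ≤ W)
    (hW : W.map f ≤ U) : IsSumTwoSquareZero f := by
  rw [← conj_blockEnd_compression h f, compression_eq_zero h hU, compression_eq_zero h.symm hW]
  have hsum (b : W →ₗ[R] U) (c : U →ₗ[R] W) : IsSumTwoSquareZero (blockEnd 0 b c 0) :=
    ⟨_, _, blockEnd_upper_sq b, blockEnd_lower_sq c,
      by simp only [blockEnd_add, add_zero, zero_add]⟩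
  exact (hsum _ _).map (U.prodEquivOfIsCompl W h).conjRingEquiv.toRingHom

theorem trace_compression_add_trace_compression {F V : Type*} [Field F] [AddCommGroup V]
    [Module F V] [FiniteDimensional F V] {U W : Submodule F V} (h : IsCompl U W) (f : End F V) :
    LinearMap.trace F U (compression h f) + LinearMap.trace F W (compression h.symm f) =
      LinearMap.trace F V f := by
  have trace_eq {U W : Submodule F V} (h : IsCompl U W) :
      LinearMap.trace F U (compression h f) = LinearMap.trace F V (f ∘ₗ U.projection W h) :=
    LinearMap.trace_comp_comm' (f ∘ₗ U.subtype) (U.projectionOnto W h)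
  rw [trace_eq h, trace_eq h.symm, ← map_add, ← LinearMap.comp_add,
    Submodule.projection_add_projection_eq_id, LinearMap.comp_id]

end Compression

section Nilpotent

theorem exists_disjoint_sup_eq_sup {α : Type*} [Lattice α] [BoundedOrder α] [IsModularLattice α]
    [ComplementedLattice α] {i j p q : α} (hip : i ≤ p) (hjq : j ≤ q) (hij : Disjoint i j) :
    ∃ i' j', i ≤ i' ∧ i' ≤ p ∧ j ≤ j' ∧ j' ≤ q ∧ Disjoint i' j' ∧ i' ⊔ j' = p ⊔ q := by
  have exists_relative_compl {x y r : α} (hxr : x ≤ r) (hyr : y ≤ r) (hxy : Disjoint x y) :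
      ∃ z, x ≤ z ∧ z ≤ r ∧ Disjoint z y ∧ y ⊔ z = r := by
    obtain ⟨c, hxc, hc⟩ := hxy.exists_isCompl
    exact ⟨c ⊓ r, le_inf hxc hxr, inf_le_right, hc.disjoint.mono_left inf_le_left, by
      rw [← sup_inf_assoc_of_le c hyr, hc.symm.sup_eq_top, top_inf_eq]⟩
  obtain ⟨i', hii', hi'p, hi'd, hi's⟩ :=
    exists_relative_compl hip inf_le_left (hij.mono_right (inf_le_right : p ⊓ j ≤ j))
  rw [← disjoint_assoc, inf_eq_left.mpr hi'p] at hi'd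
  obtain ⟨j', hjj', hj'q, hj'd, hj's⟩ :=
    exists_relative_compl hjq inf_le_right (hi'd.symm.inf_right q)
  have hq : q ≤ i' ⊔ j' := hj's ▸ sup_le_sup_right inf_le_left j'
  have hp : p ≤ i' ⊔ j' := hi's ▸ sup_le (inf_le_right.trans (hjq.trans hq)) le_sup_left
  refine ⟨i', j', hii', hi'p, hjj', hj'q, ?_, ?_⟩
  · rwa [inf_comm, ← disjoint_assoc, inf_eq_left.mpr hj'q, disjoint_comm] at hj'd
  · exact le_antisymm (sup_le_sup hi'p hj'q) (sup_le hp hq)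

variable {R M : Type*} [Ring R] [AddCommGroup M] [Module R M]

theorem le_inf_comap_sup_inf_comap {f : End R M} {S I J : Submodule R M} (h : S.map f = I ⊔ J) :
    S ≤ S ⊓ J.comap f ⊔ S ⊓ I.comap f := by
  intro x hx
  obtain ⟨a, ha, b, hb, hab⟩ := Submodule.mem_sup.mp (h.le (Submodule.mem_map_of_mem hx))
  obtain ⟨y, hy, rfl⟩ := h.ge (Submodule.mem_sup_left ha)
  have hb' : f (x - y) = b := by rw [map_sub, ← hab, add_sub_cancel_left]
  exact Submodule.mem_sup.mpr
    ⟨x - y, ⟨S.sub_mem hx hy, by simpa [hb'] using hb⟩, y, ⟨hy, ha⟩, sub_add_cancel x y⟩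

theorem exists_disjoint_map_le_map_le_of_map [IsSemisimpleModule R M] {f : End R M}
    {S I J : Submodule R M} (hS : S.map f ≤ S) (hd : Disjoint I J) (hs : I ⊔ J = S.map f)
    (hI : I.map f ≤ J) (hJ : J.map f ≤ I) :
    ∃ I' J' : Submodule R M, Disjoint I' J' ∧ I' ⊔ J' = S ∧ I'.map f ≤ J' ∧ J'.map f ≤ I' := by
  rw [Submodule.map_le_iff_le_comap] at hI hJ
  -- Any `I'` with `I ≤ I' ≤ S ⊓ f⁻¹ J` and `J'` with `J ≤ J' ≤ S ⊓ f⁻¹ I` are exchanged by `f`.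
  obtain ⟨I', J', hII', hI', hJJ', hJ', hd', hs'⟩ := exists_disjoint_sup_eq_sup
    (le_inf (le_sup_left.trans (hs.le.trans hS)) hI)
    (le_inf (le_sup_right.trans (hs.le.trans hS)) hJ) hd
  refine ⟨I', J', hd', hs'.trans (le_antisymm (sup_le inf_le_left inf_le_left)
    (le_inf_comap_sup_inf_comap hs.symm)), ?_, ?_⟩
  · exact (Submodule.map_le_iff_le_comap.mpr (hI'.trans inf_le_right)).trans hJJ'
  · exact (Submodule.map_le_iff_le_comap.mpr (hJ'.trans inf_le_right)).trans hII'

theorem exists_isCompl_map_le_map_le_of_isNilpotent [IsSemisimpleModule R M] {f : End R M}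
    (hf : IsNilpotent f) :
    ∃ I J : Submodule R M, IsCompl I J ∧ I.map f ≤ J ∧ J.map f ≤ I := by
  obtain ⟨m, hm⟩ := hf
  have range_pow_eq_sup : ∀ k ≤ m, ∃ I J : Submodule R M,
      Disjoint I J ∧ I ⊔ J = LinearMap.range (f ^ k) ∧ I.map f ≤ J ∧ J.map f ≤ I := by
    intro k hk
    induction hk using Nat.decreasingInduction with
    | self => exact ⟨⊥, ⊥, by simp [hm]⟩
    | of_succ k _ ih =>
      obtain ⟨I, J, hd, hs, hI, hJ⟩ := ih
      have hmap : (LinearMap.range (f ^ k)).map f = LinearMap.range (f ^ (k + 1)) := by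
        rw [pow_succ', Module.End.mul_eq_comp, LinearMap.range_comp]
      refine exists_disjoint_map_le_map_le_of_map ?_ hd (hs.trans hmap.symm) hI hJ
      rw [hmap, pow_succ]
      exact LinearMap.range_comp_le_range _ _
  obtain ⟨I, J, hd, hs, hI, hJ⟩ := range_pow_eq_sup 0 m.zero_le
  exact ⟨I, J, ⟨hd, codisjoint_iff.mpr (hs.trans LinearMap.range_id)⟩, hI, hJ⟩

theorem isSumTwoSquareZero_of_isNilpotent [IsSemisimpleModule R M] {f : End R M}
    (hf : IsNilpotent f) : IsSumTwoSquareZero f := by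
  obtain ⟨I, J, h, hI, hJ⟩ := exists_isCompl_map_le_map_le_of_isNilpotent hf
  exact isSumTwoSquareZero_of_map_le h hI hJ

end Nilpotent

section TraceZero

variable {F V : Type*} [Field F] [AddCommGroup V] [Module F V]

theorem exists_notMem_span_of_ne_smul {f : End F V} (hf : ∀ c : F, f ≠ c • 1) :
    ∃ v, f v ∉ F ∙ v := by
  by_contra! h
  obtain ⟨c, hc⟩ := f.exists_eq_smul_id_of_forall_notLinearIndependent fun v => by
    obtain ⟨c, hc⟩ := Submodule.mem_span_singleton.mp (h v)
    intro hli
    simpa using LinearIndependent.pair_iff.mp hli c (-1) (by simp [hc])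
  exact hf c hc

theorem notMem_span_singleton_apply {f : End F V} {v : V} (h : f v ∉ F ∙ v) : v ∉ F ∙ f v := by
  intro hv
  have hv₀ : v ∉ Submodule.span F ∅ := by
    rw [Submodule.span_empty, Submodule.mem_bot]
    rintro rfl
    exact h (by simp)
  exact h (by simpa using mem_span_insert_exchange (s := ∅) (by simpa using hv) hv₀)

theorem exists_isCompl_span_singleton {v : V} {S : Submodule F V} (hv : v ∉ S) :
    ∃ W, S ≤ W ∧ IsCompl W (F ∙ v) :=
  (Submodule.disjoint_span_singleton_of_notMem hv).exists_isCompl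

theorem sub_smul_mem_of_compression_eq_smul {U W : Submodule F V} {h : IsCompl U W} {f : End F V}
    {c : F} (hc : compression h f = c • 1) {x : V} (hx : x ∈ U) : f x - c • x ∈ W := by
  simpa [hc] using sub_compression_mem h f ⟨x, hx⟩

theorem exists_compression_ne_smul {f : End F V} {v : V} (hv : f v ∉ F ∙ v)
    (hspan : Submodule.span F {v, f v} ≠ ⊤) :
    ∃ (W : Submodule F V) (h : IsCompl W (F ∙ v)), f v ∈ W ∧ ∀ c : F, compression h f ≠ c • 1 := by
  -- If all these compressions were scalar, the scalar would not depend on `W`, so `f` would act as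
  -- that scalar modulo `v` outside the span of `v` and `f v`. Apply this to `x` and `x + v`.
  by_contra! hscalar
  have hfv : v ∉ F ∙ f v := notMem_span_singleton_apply hv
  obtain ⟨W₀, hW₀, h₀⟩ := exists_isCompl_span_singleton hfv
  obtain ⟨c, hc⟩ := hscalar W₀ h₀ (hW₀ (Submodule.mem_span_singleton_self _))
  have sub_smul_mem : ∀ x ∉ Submodule.span F {v, f v}, f x - c • x ∈ F ∙ v := by
    intro x hx
    have hv' : v ∉ Submodule.span F {x, f v} := fun hmem =>
      hx (mem_span_insert_exchange hmem hfv)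
    obtain ⟨W, hW, h⟩ := exists_isCompl_span_singleton hv'
    obtain ⟨hxW, hfvW⟩ : x ∈ W ∧ f v ∈ W := by
      simpa [Submodule.span_le, Set.insert_subset_iff] using hW
    obtain ⟨d, hd⟩ := hscalar W h hfvW
    have hcd : c = d := by
      by_contra hne
      have hsub := Submodule.sub_mem _ (sub_smul_mem_of_compression_eq_smul hd hfvW)
        (sub_smul_mem_of_compression_eq_smul hc (hW₀ (Submodule.mem_span_singleton_self _)))
      rw [sub_sub_sub_cancel_left, ← sub_smul] at hsub
      exact hv ((Submodule.smul_mem_iff _ (sub_ne_zero.mpr hne)).mp hsub)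
    exact hcd ▸ sub_smul_mem_of_compression_eq_smul hd hxW
  obtain ⟨x, hx⟩ : ∃ x, x ∉ Submodule.span F {v, f v} := by
    simpa [Submodule.eq_top_iff'] using hspan
  have hvspan : v ∈ Submodule.span F {v, f v} := Submodule.subset_span (by simp)
  have hxv : x + v ∉ Submodule.span F {v, f v} := fun h =>
    hx ((Submodule.add_mem_iff_left _ hvspan).mp h)
  have hdiff := Submodule.sub_mem _ (sub_smul_mem _ hxv) (sub_smul_mem _ hx)
  rw [map_add, show f x + f v - c • (x + v) - (f x - c • x) = f v - c • v by module] at hdiff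
  exact hv ((Submodule.sub_mem_iff_left _
    (Submodule.smul_mem _ c (Submodule.mem_span_singleton_self v))).mp hdiff)

theorem eq_zero_of_trace_eq_zero_of_finrank_eq_one {f : End F V} (hV : finrank F V = 1)
    (hf : LinearMap.trace F V f = 0) : f = 0 := by
  have : FiniteDimensional F V := .of_finrank_eq_succ hV
  obtain ⟨c, rfl, -⟩ := LinearMap.existsUnique_eq_smul_id_of_finrank_eq_one hV f
  rw [map_smul, LinearMap.trace_id, hV, Nat.cast_one, smul_eq_mul, mul_one] at hf
  rw [hf, zero_smul]

variable [FiniteDimensional F V]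

theorem trace_compression_of_map_le {f : End F V} {U W : Submodule F V} (h : IsCompl U W)
    (hW : W.map f ≤ U) : LinearMap.trace F U (compression h f) = LinearMap.trace F V f := by
  rw [← trace_compression_add_trace_compression h f, compression_eq_zero h.symm hW, map_zero,
    add_zero]

theorem exists_compression_eq_zero_or_ne_smul {f : End F V} (hf : LinearMap.trace F V f = 0)
    (hns : ∀ c : F, f ≠ c • 1) :
    ∃ (v : V) (W : Submodule F V) (h : IsCompl W (F ∙ v)), v ≠ 0 ∧ (F ∙ v).map f ≤ W ∧
      (compression h f = 0 ∨ ∀ c : F, compression h f ≠ c • 1) := by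
  obtain ⟨v, hv⟩ := exists_notMem_span_of_ne_smul hns
  have map_le {W : Submodule F V} (hW : f v ∈ W) : (F ∙ v).map f ≤ W := by
    simpa [Submodule.map_span, Submodule.span_le] using hW
  have hv₀ : v ≠ 0 := by
    rintro rfl
    exact hv (by simp)
  by_cases hspan : Submodule.span F {v, f v} = ⊤
  · have h : IsCompl (F ∙ f v) (F ∙ v) :=
      ⟨Submodule.disjoint_span_singleton_of_notMem (notMem_span_singleton_apply hv),
        codisjoint_iff.mpr (by rw [sup_comm, ← Submodule.span_insert, hspan])⟩
    have hfv : (F ∙ v).map f ≤ F ∙ f v := map_le (Submodule.mem_span_singleton_self _)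
    have hfv₀ : f v ≠ 0 := fun h₀ => hv (h₀ ▸ Submodule.zero_mem _)
    exact ⟨v, _, h, hv₀, hfv, .inl (eq_zero_of_trace_eq_zero_of_finrank_eq_one
      (finrank_span_singleton hfv₀) ((trace_compression_of_map_le h hfv).trans hf))⟩
  · obtain ⟨W, h, hfv, hW⟩ := exists_compression_ne_smul hv hspan
    exact ⟨v, W, h, hv₀, map_le hfv, .inr hW⟩

theorem isSumTwoNilpotent_of_trace_eq_zero {f : End F V} (hf : LinearMap.trace F V f = 0)
    (hns : ∀ c : F, f ≠ c • 1) : IsSumTwoNilpotent f := by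
  induction hn : finrank F V using Nat.strong_induction_on generalizing V with
  | _ n ih =>
    obtain ⟨v, W, h, hv, hfv, hW⟩ := exists_compression_eq_zero_or_ne_smul hf hns
    refine .of_compression h ?_ (compression_eq_zero h.symm hfv ▸ .zero)
    rcases hW with hzero | hns'
    · exact hzero ▸ .zero
    · have hlt : W < ⊤ := lt_top_iff_ne_top.mpr fun hW =>
        hv (Submodule.span_singleton_eq_bot.mp (eq_bot_of_top_isCompl (hW ▸ h)))
      exact ih _ (hn ▸ Submodule.finrank_lt hlt.ne) ((trace_compression_of_map_le h hfv).trans hf)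
        hns' rfl

end TraceZero

section Padding

variable {R M : Type*} [Ring R] [AddCommGroup M] [Module R M]

theorem isSumThreeSquareZero_blockEnd_of_isNilpotent [IsSemisimpleRing R] {a b : End R M}
    (ha : IsNilpotent a) (hb : IsNilpotent b) : IsSumThreeSquareZero (blockEnd a b a b) := by
  have h := (isSumTwoSquareZero_of_isNilpotent (isNilpotent_blockEnd_upper ha hb b)).add
    (blockEnd_lower_sq a)
  simpa only [blockEnd_add, add_zero, zero_add] using h

theorem isSumThreeSquareZero_blockEnd_of_mul_eq_one (h b c : End R M) {s t : End R M}
    (hst : s * t = 1) : IsSumThreeSquareZero (blockEnd h b c (-(t * h * s))) := by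
  have cancel (x : End R M) : s * (t * x) = x := by rw [← mul_assoc, hst, one_mul]
  have hsq : blockEnd h (-(h * s)) (t * h) (-(t * h * s)) ^ 2 = 0 := by
    simp [sq, blockEnd_mul, ← Module.End.mul_eq_comp, mul_assoc, cancel,
      blockEnd_zero]
  refine ⟨_, _, _, hsq, blockEnd_upper_sq (b + h * s), blockEnd_lower_sq (c - t * h), ?_⟩
  simp only [blockEnd_add, add_zero, neg_add_cancel_comm_assoc, add_sub_cancel]

theorem IsSumThreeSquareZero.prodMap_zero_of_blockEnd {a b g : End R M} (hg : (a + b) * g = b)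
    (h : IsSumThreeSquareZero (blockEnd a b a b)) :
    IsSumThreeSquareZero ((a + b).prodMap (0 : End R M)) := by
  have hinv : blockEnd 1 (-g) 1 (1 - g) * blockEnd (1 - g) g (-1) 1 = 1 := by
    simp [blockEnd_mul, ← Module.End.mul_eq_comp, ← blockEnd_one]
  have hcancel : -(a * g) + b * (1 - g) = 0 := by
    calc -(a * g) + b * (1 - g) = b - (a + b) * g := by noncomm_ring
      _ = 0 := by rw [hg, sub_self]
  have hconj : blockEnd (1 - g) g (-1) 1 * blockEnd a b a b * blockEnd 1 (-g) 1 (1 - g) =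
      (a + b).prodMap 0 := by
    simp [blockEnd_mul, ← Module.End.mul_eq_comp, ← blockEnd_diagonal, sub_mul, hcancel]
  exact hconj ▸ h.conj hinv

theorem IsSumThreeSquareZero.prodMap_zero_of_isUnit {a b : End R M} (hu : IsUnit (a + b))
    (h : IsSumThreeSquareZero (blockEnd a b a b)) :
    IsSumThreeSquareZero ((a + b).prodMap (0 : End R M)) := by
  obtain ⟨u, hu⟩ := hu
  exact h.prodMap_zero_of_blockEnd (g := ↑u⁻¹ * b) (by rw [← hu, u.mul_inv_cancel_left])

theorem isSumThreeSquareZero_prodMap_zero_of_isNilpotent [IsSemisimpleRing R] {f : End R M}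
    (hf : IsNilpotent f) : IsSumThreeSquareZero (f.prodMap (0 : End R M)) := by
  rw [← blockEnd_diagonal]
  simpa only [add_zero] using (isSumTwoSquareZero_of_isNilpotent
    (isNilpotent_blockEnd_upper hf .zero 0)).add (zero_pow two_ne_zero)

section Scalar

variable {R M : Type*} [CommRing R] [AddCommGroup M] [Module R M]

theorem exists_sub_mul_mul_eq_smul_one {n : ℕ} (b : Basis (Fin n) R M) {c : R}
    (hc : n * c = 0) : ∃ h s t : End R M, s * t = 1 ∧ h - t * h * s = c • 1 := by
  let t := b.equiv b (finRotate n)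
  let h : End R M := b.constr R fun i => ((i : ℕ) * c) • b i
  have hst : (t.symm : End R M) * (t : End R M) = 1 := by ext; simp
  have hts : (t : End R M) * (t.symm : End R M) = 1 := by ext; simp
  have hsub : h * t - t * h = c • (t : End R M) := by
    refine b.ext fun i => ?_
    obtain _ | n := n
    · exact i.elim0
    rcases eq_or_ne i (Fin.last n) with rfl | hi
    · have hlast : -(n * c) = c := by
        linear_combination (norm := (push_cast; ring)) -hc
      simp [t, h, ← neg_smul, hlast]
    · have hval : ((i + 1 : Fin (n + 1)) : ℕ) = i + 1 :=
        Fin.val_add_one_of_lt (Fin.lt_last_iff_ne_last.mpr hi)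
      simp [t, h, hval, add_mul, add_smul]
  refine ⟨h, t.symm, t, hst, ?_⟩
  calc h - t * h * t.symm = (h * t - t * h) * t.symm := by
        rw [sub_mul, mul_assoc h, hts, mul_one]
    _ = c • 1 := by rw [hsub, smul_mul_assoc, hts]

theorem isSumThreeSquareZero_smul_one_prodMap_zero {n : ℕ} (b : Basis (Fin n) R M) {c : R}
    (hc : n * c = 0) (hu : IsUnit (c • 1 : End R M)) :
    IsSumThreeSquareZero ((c • 1 : End R M).prodMap (0 : End R M)) := by
  obtain ⟨h, s, t, hst, hsub⟩ := exists_sub_mul_mul_eq_smul_one b hc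
  rw [← hsub, sub_eq_add_neg] at hu ⊢
  exact .prodMap_zero_of_isUnit hu (isSumThreeSquareZero_blockEnd_of_mul_eq_one h _ h hst)

end Scalar

theorem IsSumThreeSquareZero.prodMap_zero_of_conj {N P : Type*} [AddCommGroup N] [AddCommGroup P]
    [Module R N] [Module R P] {f : End R M} {g : End R N} (e : (M × N) ≃ₗ[R] P)
    (hf : IsSumThreeSquareZero (f.prodMap (0 : End R M)))
    (hg : IsSumThreeSquareZero (g.prodMap (0 : End R N))) :
    IsSumThreeSquareZero ((e.conjRingEquiv (f.prodMap g)).prodMap (0 : End R P)) := by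
  have h := ((hf.prodMk hg).map (LinearMap.prodMapRingHom R (M × M) (N × N))).map
    ((LinearEquiv.prodProdProdComm R M M N N).trans (e.prodCongr e)).conjRingEquiv.toRingHom
  convert h using 1
  have he : e (0, 0) = 0 := map_zero e
  exact LinearMap.ext fun x => Prod.ext (by simp) (by simp [he])

theorem exists_conjRingEquiv_prodMap_eq [IsNoetherian R M] [IsArtinian R M] (f : End R M) :
    ∃ (K L : Submodule R M) (e : (K × L) ≃ₗ[R] M) (n : End R K) (u : End R L),
      IsNilpotent n ∧ IsUnit u ∧ e.conjRingEquiv (n.prodMap u) = f := by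
  obtain ⟨k, hk, hcompl⟩ :=
    ((Filter.eventually_ge_atTop 1).and f.eventually_isCompl_ker_pow_range_pow).exists
  have hcomm : Commute (f ^ k) f := Commute.pow_self f k
  have hK : ∀ x ∈ LinearMap.ker (f ^ k), f x ∈ LinearMap.ker (f ^ k) :=
    fun x hx => by
      rw [LinearMap.mem_ker, ← Module.End.mul_apply, hcomm.eq, Module.End.mul_apply,
        LinearMap.mem_ker.mp hx, map_zero]
  have hL : ∀ x ∈ LinearMap.range (f ^ k), f x ∈ LinearMap.range (f ^ k) := by
    rintro _ ⟨y, rfl⟩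
    exact ⟨f y, LinearMap.congr_fun hcomm y⟩
  refine ⟨_, _, Submodule.prodEquivOfIsCompl _ _ hcompl, f.restrict hK, f.restrict hL,
    ⟨k, ?_⟩, ?_, ?_⟩
  · rw [Module.End.pow_restrict]
    ext x
    simp
  · rw [Module.End.isUnit_iff]
    refine IsArtinian.bijective_of_injective_endomorphism _
      ((injective_iff_map_eq_zero _).mpr fun x hx => ?_)
    have hx₀ : f x = 0 := congrArg Subtype.val hx
    have hxK : (x : M) ∈ LinearMap.ker (f ^ k) :=
      f.iterateKer.monotone hk (by simpa using hx₀)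
    exact Subtype.ext (Submodule.disjoint_def.mp hcompl.disjoint x hxK x.2)
  · refine LinearMap.ext fun x => ?_
    obtain ⟨y, rfl⟩ := (Submodule.prodEquivOfIsCompl _ _ hcompl).surjective x
    simp

variable {F V : Type*} [Field F] [AddCommGroup V] [Module F V] [FiniteDimensional F V]

theorem isSumThreeSquareZero_prodMap_zero_of_isUnit_of_trace_eq_zero {f : End F V} (hu : IsUnit f)
    (hf : LinearMap.trace F V f = 0) : IsSumThreeSquareZero (f.prodMap (0 : End F V)) := by
  by_cases hs : ∃ c : F, f = c • 1
  · obtain ⟨c, rfl⟩ := hs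
    exact isSumThreeSquareZero_smul_one_prodMap_zero (finBasis F V)
      (by simpa [mul_comm] using hf) hu
  · push Not at hs
    obtain ⟨a, b, ha, hb, rfl⟩ := isSumTwoNilpotent_of_trace_eq_zero hf hs
    exact .prodMap_zero_of_isUnit hu (isSumThreeSquareZero_blockEnd_of_isNilpotent ha hb)

theorem isSumThreeSquareZero_prodMap_zero_of_trace_eq_zero {f : End F V}
    (hf : LinearMap.trace F V f = 0) : IsSumThreeSquareZero (f.prodMap (0 : End F V)) := by
  obtain ⟨K, L, e, n, u, hn, hu, rfl⟩ := exists_conjRingEquiv_prodMap_eq f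
  have htrace : LinearMap.trace F L u = 0 := by
    have h := (LinearMap.trace_conj' (n.prodMap u) e).symm.trans hf
    rwa [LinearMap.trace_prodMap', (LinearMap.isNilpotent_trace_of_isNilpotent hn).eq_zero,
      zero_add] at h
  exact .prodMap_zero_of_conj e (isSumThreeSquareZero_prodMap_zero_of_isNilpotent hn)
    (isSumThreeSquareZero_prodMap_zero_of_isUnit_of_trace_eq_zero hu htrace)

end Padding

theorem trace_zero_oplus_zero_sum_three_square_zero_general {F ι : Type*} [Field F] [Fintype ι]
    [DecidableEq ι] (A : Matrix ι ι F) (hA : A.trace = 0) :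
    IsSumThreeSquareZero (Matrix.fromBlocks A 0 0 (0 : Matrix ι ι F)) := by
  let b := Pi.basisFun F ι
  have h := isSumThreeSquareZero_prodMap_zero_of_trace_eq_zero (f := Matrix.toLin b b A)
    (by simpa using hA)
  have htoMatrix : LinearMap.toMatrixAlgEquiv (b.prod b) ((Matrix.toLin b b A).prodMap 0) =
      Matrix.fromBlocks A 0 0 0 := by
    change LinearMap.toMatrix _ _ _ = _
    rw [LinearMap.toMatrix_prodMap, LinearMap.toMatrix_toLin, map_zero]
  exact htoMatrix ▸ h.map (LinearMap.toMatrixAlgEquiv (b.prod b)).toRingEquiv.toRingHom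

/-- For every trace-zero `n × n` matrix `A` over a field, the block-diagonal
matrix `A ⊕ 0ₙ` is the sum of three square-zero matrices. -/
theorem trace_zero_oplus_zero_sum_three_square_zero (F : Type*) [Field F] (n : ℕ)
    (A : Matrix (Fin n) (Fin n) F) (hA : A.trace = 0) :
    ∃ B C D : Matrix (Fin n ⊕ Fin n) (Fin n ⊕ Fin n) F,
      B ^ 2 = 0 ∧ C ^ 2 = 0 ∧ D ^ 2 = 0 ∧
      Matrix.fromBlocks A 0 0 (0 : Matrix (Fin n) (Fin n) F) = B + C + D := by
  exact trace_zero_oplus_zero_sum_three_square_zero_general A hA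
end

section
/- Over a field of characteristic 2, every square matrix with trace zero is the sum of three square-zero matrices. -/
/-!
Every endomorphism `f` of a finite-dimensional space in characteristic 2 agrees, up to terms that
are off-diagonal for the grading given by some projection `π`, with `N + φ ⊗ u`, where `N` is
square-zero and annihilates the rank one map `φ ⊗ u` on both sides. An off-diagonal `X` is the sum
`π X + X π` of two square-zero maps, so the trace of `f` is `φ u`; once it vanishes, `N + φ ⊗ u`
is square-zero as well.

The splitting is found by induction on the dimension. If `f` is not scalar, it has a cyclic direct
summand of dimension at least two. A cyclic map shifts a basis, so it is off-diagonal for the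
grading by parity, apart from a rank one map caused by the last basis vector. A transvection of
the basis adds a rank one map `ε ⊗ e` in the other parity, with `ε e` at our disposal. The choice
`ε e = -φ u` makes `(φ + ε) ⊗ (u + e)` square-zero, which absorbs the rank one map of the
complementary summand. If `f` is scalar, characteristic 2 enters: modulo off-diagonal terms
`c • 1` on a plane agrees with the square-zero matrix with all entries equal to `c`.
-/

section OffDiagonal

variable {S : Type*} [Ring S]

/-- For an idempotent `π` this says that `X` is off-diagonal in the Peirce decomposition of `π`:
it is equivalent to `π * X * π = 0` together with `(1 - π) * X * (1 - π) = 0`. -/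
def IsOffDiagonal (π X : S) : Prop :=
  π * X + X * π = X

variable {π X : S}

theorem IsOffDiagonal.mul_mul_eq_zero (hX : IsOffDiagonal π X) (hπ : IsIdempotentElem π) :
    π * X * π = 0 := by
  have h : π * X + π * X * π = π * X := by
    calc π * X + π * X * π = π * π * X + π * X * π := by rw [hπ.eq]
      _ = π * (π * X + X * π) := by rw [mul_add, mul_assoc, mul_assoc]
      _ = π * X := by rw [hX]
  exact add_eq_left.mp h

theorem IsOffDiagonal.mul_left_sq_eq_zero (hX : IsOffDiagonal π X) (hπ : IsIdempotentElem π) :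
    (π * X) ^ 2 = 0 := by
  rw [sq, ← mul_assoc, hX.mul_mul_eq_zero hπ, zero_mul]

theorem IsOffDiagonal.mul_right_sq_eq_zero (hX : IsOffDiagonal π X) (hπ : IsIdempotentElem π) :
    (X * π) ^ 2 = 0 := by
  rw [sq, mul_assoc, ← mul_assoc π, hX.mul_mul_eq_zero hπ, mul_zero]

theorem IsOffDiagonal.sub {Y : S} (hX : IsOffDiagonal π X) (hY : IsOffDiagonal π Y) :
    IsOffDiagonal π (X - Y) := by
  rw [IsOffDiagonal, mul_sub, sub_mul, sub_add_sub_comm, hX, hY]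

end OffDiagonal

section Splitting

open Module

variable {R M M' : Type*} [CommRing R] [AddCommGroup M] [Module R M] [AddCommGroup M']
  [Module R M']

/-- Relative to the grading of the module given by the projection `π`, the endomorphism `f` agrees
with `N + φ ⊗ u` up to off-diagonal terms, where `φ ⊗ u` lives on the range of `π`. -/
structure IsRankOneSplitting (f N π : End R M) (u : M) (φ : Dual R M) : Prop where
  isIdempotentElem : IsIdempotentElem π
  map_vec : π u = u
  form_map : ∀ x, φ (π x) = φ x
  isOffDiagonal : IsOffDiagonal π (f - N - φ.smulRight u)

/-- `f` has a rank one splitting `f ≡ N + φ ⊗ u` in which `N` is square-zero and both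
`N * (φ ⊗ u)` and `(φ ⊗ u) * N` vanish, so that `(N + φ ⊗ u) ^ 2 = φ u • (φ ⊗ u)`. -/
def HasSquareZeroSplitting (f : End R M) : Prop :=
  ∃ (N π : End R M) (u : M) (φ : Dual R M),
    IsRankOneSplitting f N π u φ ∧ N ^ 2 = 0 ∧ N u = 0 ∧ ∀ x, φ (N x) = 0

/-- `g` has a rank one splitting `g ≡ ε ⊗ e + θ ⊗ v` in which `θ ⊗ v` lives on the range of the
projection and `ε ⊗ e` on its kernel, with `ε e = a`. -/
def HasOppositeRankOneSplitting (g : End R M) (a : R) : Prop :=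
  ∃ (ρ : End R M) (e v : M) (ε θ : Dual R M),
    IsRankOneSplitting g (ε.smulRight e) ρ v θ ∧ ρ e = 0 ∧ (∀ x, ε (ρ x) = 0) ∧ ε e = a

theorem HasSquareZeroSplitting.exists_add_add_of_trace_eq_zero [IsReduced R] [Module.Free R M]
    [Module.Finite R M] {f : End R M} (hf : HasSquareZeroSplitting f)
    (htr : LinearMap.trace R M f = 0) :
    ∃ g h k : End R M, g ^ 2 = 0 ∧ h ^ 2 = 0 ∧ k ^ 2 = 0 ∧ f = g + h + k := by
  obtain ⟨N, π, u, φ, hs, hN, hNu, hφN⟩ := hf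
  obtain ⟨X, hX⟩ : ∃ X, X = f - N - φ.smulRight u := ⟨_, rfl⟩
  have hoff : IsOffDiagonal π X := hX ▸ hs.isOffDiagonal
  have hπX : (π * X) ^ 2 = 0 := hoff.mul_left_sq_eq_zero hs.isIdempotentElem
  have hXπ : (X * π) ^ 2 = 0 := hoff.mul_right_sq_eq_zero hs.isIdempotentElem
  have hsum : f = N + φ.smulRight u + π * X + X * π := by
    rw [add_assoc, hoff, hX]
    abel
  have trace_eq_zero {g : End R M} (hg : g ^ 2 = 0) : LinearMap.trace R M g = 0 :=
    (LinearMap.isNilpotent_trace_of_isNilpotent ⟨2, hg⟩).eq_zero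
  have hφu : φ u = 0 := by
    simpa [trace_eq_zero hN, trace_eq_zero hπX, trace_eq_zero hXπ, htr] using
      (congrArg (LinearMap.trace R M) hsum).symm
  refine ⟨N + φ.smulRight u, π * X, X * π, ?_, hπX, hXπ, hsum⟩
  ext x
  have hNN : N (N x) = 0 := by simpa [sq] using LinearMap.congr_fun hN x
  simp [sq, hNN, hNu, hφN, hφu]

theorem HasSquareZeroSplitting.of_equiv {f : End R M} {g : End R M'}
    (hf : HasSquareZeroSplitting f) (e : M ≃ₗ[R] M') (h : ∀ x, e (f x) = g (e x)) :
    HasSquareZeroSplitting g := by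
  obtain rfl : e.conj f = g := by
    ext x
    simp [LinearEquiv.conj_apply, h]
  obtain ⟨N, π, u, φ, hs, hN, hNu, hφN⟩ := hf
  refine ⟨e.conj N, e.conj π, e u, φ ∘ₗ e.symm.toLinearMap, ⟨?_, ?_, ?_, ?_⟩, ?_, ?_, ?_⟩
  · exact hs.isIdempotentElem.map e.conjRingEquiv
  · simp [LinearEquiv.conj_apply, hs.map_vec]
  · simp [LinearEquiv.conj_apply, hs.form_map]
  · ext x
    simpa [LinearEquiv.conj_apply] using
      LinearMap.congr_fun (congrArg e.conj hs.isOffDiagonal) x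
  · exact (map_pow e.conjRingEquiv N 2).symm.trans (by rw [hN, map_zero])
  · simp [LinearEquiv.conj_apply, hNu]
  · simp [LinearEquiv.conj_apply, hφN]

theorem hasSquareZeroSplitting_smulRight (φ : Dual R M) (u : M) :
    HasSquareZeroSplitting (φ.smulRight u) :=
  ⟨0, 1, u, φ, ⟨.one, rfl, fun _ => rfl, by simp [IsOffDiagonal]⟩, by simp, rfl, by simp⟩

theorem IsOffDiagonal.prodMap {π f : End R M} {ρ g : End R M'} (hf : IsOffDiagonal π f)
    (hg : IsOffDiagonal ρ g) : IsOffDiagonal (π.prodMap ρ) (f.prodMap g) := by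
  rw [IsOffDiagonal, LinearMap.prodMap_mul, LinearMap.prodMap_mul, ← LinearMap.prodMap_add, hf, hg]

theorem IsRankOneSplitting.prodMap {f N π : End R M} {u : M} {φ : Dual R M}
    (hf : IsRankOneSplitting f N π u φ) {g ρ : End R M'} {e v : M'} {ε θ : Dual R M'}
    (hg : IsRankOneSplitting g (ε.smulRight e) ρ v θ) (hρe : ρ e = 0) (hερ : ∀ x, ε (ρ x) = 0) :
    IsRankOneSplitting (f.prodMap g) (N.prodMap 0 + (φ.coprod ε).smulRight (u, e))
      (π.prodMap ρ) (0, v) (θ ∘ₗ LinearMap.snd R M M') where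
  isIdempotentElem := by
    rw [IsIdempotentElem, LinearMap.prodMap_mul, hf.isIdempotentElem, hg.isIdempotentElem]
  map_vec := by simp [hg.map_vec]
  form_map := by simp [hg.form_map]
  isOffDiagonal := by
    let Z : End R (M × M') :=
      (ε.smulRight u ∘ₗ LinearMap.snd R M M').prod (φ.smulRight e ∘ₗ LinearMap.fst R M M')
    have hZ : IsOffDiagonal (π.prodMap ρ) Z := by
      refine LinearMap.ext fun x => Prod.ext ?_ ?_
      · simp [Z, hf.map_vec, hερ]
      · simp [Z, hf.form_map, hρe]
    convert (hf.isOffDiagonal.prodMap hg.isOffDiagonal).sub hZ using 1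
    refine LinearMap.ext fun x => Prod.ext ?_ ?_
    · simp [Z, add_smul, sub_sub, add_assoc]
    · simp [Z, add_smul, sub_sub, add_assoc, add_left_comm, add_comm]

theorem HasSquareZeroSplitting.prodMap {f : End R M} {g : End R M'}
    (hf : HasSquareZeroSplitting f) (hg : ∀ a, HasOppositeRankOneSplitting g a) :
    HasSquareZeroSplitting (f.prodMap g) := by
  obtain ⟨N, π, u, φ, hs, hN, hNu, hφN⟩ := hf
  obtain ⟨ρ, e, v, ε, θ, ht, hρe, hερ, hεe⟩ := hg (-φ u)
  have hNN (x) : N (N x) = 0 := by simpa [sq] using LinearMap.congr_fun hN x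
  have hεv : ε v = 0 := by rw [← ht.map_vec, hερ]
  have hθe : θ e = 0 := by rw [← ht.form_map, hρe, map_zero]
  refine ⟨_, _, _, _, hs.prodMap ht hρe hερ, ?_, ?_, ?_⟩
  · ext <;> simp [sq, hNN, hNu, hφN, hεe]
  · simp [hεv]
  · simp [hθe]

theorem HasSquareZeroSplitting.prodMap_smul_id [CharP R 2] {f : End R M}
    (hf : HasSquareZeroSplitting f) (c : R) :
    HasSquareZeroSplitting (f.prodMap (c • LinearMap.id : End R (M' × M'))) := by
  obtain ⟨N, π, u, φ, hs, hN, hNu, hφN⟩ := hf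
  have hNN (x) : N (N x) = 0 := by simpa [sq] using LinearMap.congr_fun hN x
  have add_self (x : M') : x + x = 0 := by rw [← two_smul R, CharTwo.two_eq_zero, zero_smul]
  let s : M' × M' →ₗ[R] M' := LinearMap.fst R M' M' + LinearMap.snd R M' M'
  refine ⟨N.prodMap (c • s.prod s), π.prodMap (LinearMap.prodMap 1 0), (u, 0),
    φ ∘ₗ LinearMap.fst R M (M' × M'), ⟨?_, ?_, ?_, ?_⟩, ?_, ?_, ?_⟩
  · rw [IsIdempotentElem, LinearMap.prodMap_mul, LinearMap.prodMap_mul, hs.isIdempotentElem,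
      one_mul, zero_mul]
  · simp [hs.map_vec]
  · simp [hs.form_map]
  · refine LinearMap.ext fun ⟨x, y, z⟩ => Prod.ext ?_ (Prod.ext ?_ ?_)
    · simpa using LinearMap.congr_fun hs.isOffDiagonal x
    · simp [s]
    · simp [s]
  · ext <;> simp [sq, s, hNN, add_self]
  · simp [hNu]
  · simp [hφN]

theorem hasSquareZeroSplitting_smul_id [CharP R 2] [Module.Free R M] [Module.Finite R M] (c : R) :
    HasSquareZeroSplitting (c • LinearMap.id : End R M) := by
  have : Nontrivial R := CharP.nontrivial_of_char_ne_one (v := 2) (by decide)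
  obtain ⟨m, hm | hm⟩ := Nat.even_or_odd' (finrank R M)
  · let e : (Unit × (Fin m → R) × (Fin m → R)) ≃ₗ[R] M :=
      .ofFinrankEq _ _ (by simp [hm, two_mul, finrank_zero_of_subsingleton])
    refine ((hasSquareZeroSplitting_smulRight 0 0).prodMap_smul_id c).of_equiv e fun x => ?_
    rw [LinearMap.smul_apply, LinearMap.id_apply, ← map_smul]
    rfl
  · let e : (R × (Fin m → R) × (Fin m → R)) ≃ₗ[R] M :=
      .ofFinrankEq _ _ (by simp [hm]; lia)
    refine ((hasSquareZeroSplitting_smulRight (c • .id) 1).prodMap_smul_id c).of_equiv e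
      fun x => ?_
    rw [LinearMap.smul_apply, LinearMap.id_apply, ← map_smul]
    congr 1
    ext <;> simp

end Splitting

section Cyclic

open Module Polynomial

variable {R M : Type*} [CommRing R] [AddCommGroup M] [Module R M]

/-- The smallest `f`-invariant submodule containing `v`. -/
def cyclicSubmodule (f : End R M) (v : M) : Submodule R M :=
  Submodule.span R (Set.range fun n : ℕ => (f ^ n) v)

/-- The largest `f`-invariant submodule contained in the kernel of `ψ`; in control theory, the
unobservable subspace of the pair `(ψ, f)`. -/
def unobservableSubmodule (f : End R M) (ψ : Dual R M) : Submodule R M :=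
  ⨅ n : ℕ, LinearMap.ker (ψ ∘ₗ f ^ n)

theorem mem_unobservableSubmodule {f : End R M} {ψ : Dual R M} {x : M} :
    x ∈ unobservableSubmodule f ψ ↔ ∀ n : ℕ, ψ ((f ^ n) x) = 0 := by
  simp [unobservableSubmodule]

theorem cyclicSubmodule_mem_invtSubmodule (f : End R M) (v : M) :
    cyclicSubmodule f v ∈ f.invtSubmodule := by
  rw [End.mem_invtSubmodule, cyclicSubmodule, Submodule.span_le]
  rintro _ ⟨n, rfl⟩
  exact Submodule.subset_span ⟨n + 1, by simp [pow_succ']⟩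

theorem unobservableSubmodule_mem_invtSubmodule (f : End R M) (ψ : Dual R M) :
    unobservableSubmodule f ψ ∈ f.invtSubmodule := by
  rw [End.mem_invtSubmodule_iff_forall_mem_of_mem]
  intro x hx
  rw [mem_unobservableSubmodule] at hx ⊢
  exact fun n => by simpa [pow_succ] using hx (n + 1)

theorem pow_apply_mem_span_pow_apply [Nontrivial R] {f : End R M} (hf : IsIntegral R f) (x : M)
    (n : ℕ) :
    (f ^ n) x ∈
      Submodule.span R (Set.range fun i : Fin (minpoly R f).natDegree => (f ^ (i : ℕ)) x) := by
  have h := Submodule.mem_map_of_mem (f := LinearMap.applyₗ x)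
    (hf.mem_span_pow (y := f ^ n) ⟨X ^ n, by simp⟩)
  rwa [Submodule.map_span, ← Set.range_comp] at h

theorem cyclicSubmodule_eq_span [Nontrivial R] {f : End R M} (hf : IsIntegral R f) (v : M) :
    cyclicSubmodule f v =
      Submodule.span R (Set.range fun i : Fin (minpoly R f).natDegree => (f ^ (i : ℕ)) v) := by
  refine le_antisymm (Submodule.span_le.mpr ?_) (Submodule.span_mono ?_)
  · rintro _ ⟨n, rfl⟩
    exact pow_apply_mem_span_pow_apply hf v n
  · rintro _ ⟨i, rfl⟩
    exact ⟨i, rfl⟩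

theorem unobservableSubmodule_eq_ker [Nontrivial R] {f : End R M} (hf : IsIntegral R f)
    (ψ : Dual R M) :
    unobservableSubmodule f ψ =
      LinearMap.ker (LinearMap.pi fun i : Fin (minpoly R f).natDegree => ψ ∘ₗ f ^ (i : ℕ)) := by
  ext x
  simp only [mem_unobservableSubmodule, LinearMap.ker_pi, Submodule.mem_iInf, LinearMap.mem_ker,
    LinearMap.comp_apply]
  refine ⟨fun h i => h i, fun h n => ?_⟩
  have hspan :
      Submodule.span R (Set.range fun i : Fin (minpoly R f).natDegree => (f ^ (i : ℕ)) x) ≤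
        LinearMap.ker ψ :=
    Submodule.span_le.mpr (by rintro _ ⟨i, rfl⟩; exact h i)
  exact hspan (pow_apply_mem_span_pow_apply hf x n)

theorem exists_degree_lt_aeval_apply_eq [Nontrivial R] {f : End R M} (hf : IsIntegral R f)
    {v x : M} (hx : x ∈ cyclicSubmodule f v) :
    ∃ r : R[X], r.degree < (minpoly R f).natDegree ∧ aeval f r v = x := by
  rw [cyclicSubmodule_eq_span hf, Submodule.mem_span_range_iff_exists_fun] at hx
  obtain ⟨c, rfl⟩ := hx
  exact ⟨∑ i, C (c i) * X ^ (i : ℕ), degree_sum_fin_lt c, by simp [LinearMap.sum_apply]⟩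

theorem apply_aeval_apply_eq_coeff {f : End R M} {ψ : Dual R M} {v : M} {n : ℕ}
    (hlt : ∀ i < n, ψ ((f ^ i) v) = 0) (hn : ψ ((f ^ n) v) = 1) {r : R[X]}
    (hr : r.natDegree ≤ n) : ψ (aeval f r v) = r.coeff n := by
  rw [aeval_eq_sum_range' (Nat.lt_succ_of_le hr), Finset.sum_range_succ]
  simp +contextual [LinearMap.sum_apply, Finset.sum_eq_zero, hlt, hn]

theorem disjoint_unobservableSubmodule_cyclicSubmodule [Nontrivial R] {f : End R M}
    (hf : IsIntegral R f) {ψ : Dual R M} {v : M} {n : ℕ} (hd : (minpoly R f).natDegree = n + 1)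
    (hlt : ∀ i < n, ψ ((f ^ i) v) = 0) (hn : ψ ((f ^ n) v) = 1) :
    Disjoint (unobservableSubmodule f ψ) (cyclicSubmodule f v) := by
  rw [Submodule.disjoint_def]
  intro x hxψ hxv
  obtain ⟨r, hr, rfl⟩ := exists_degree_lt_aeval_apply_eq hf hxv
  -- A power of `X` moves the leading coefficient to degree `n`, where `ψ` reads it off.
  suffices r.leadingCoeff = 0 by simp [leadingCoeff_eq_zero.mp this]
  have hrn : r.natDegree ≤ n :=
    natDegree_le_of_degree_le (by rw [hd] at hr; exact Order.le_of_lt_succ hr)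
  calc r.leadingCoeff = (X ^ (n - r.natDegree) * r).coeff n := by
        conv_rhs =>
          rw [← Nat.add_sub_of_le hrn, Nat.add_sub_cancel_left, coeff_X_pow_mul, coeff_natDegree]
    _ = ψ (aeval f (X ^ (n - r.natDegree) * r) v) :=
        (apply_aeval_apply_eq_coeff hlt hn
          (natDegree_mul_le.trans (by rw [natDegree_X_pow]; lia))).symm
    _ = 0 := by simpa using mem_unobservableSubmodule.mp hxψ (n - r.natDegree)

variable {F V : Type*} [Field F] [AddCommGroup V] [Module F V]

theorem exists_forall_aeval_apply_eq_zero_iff [FiniteDimensional F V] (f : End F V) :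
    ∃ v : V, ∀ r : F[X], aeval f r v = 0 ↔ aeval f r = 0 := by
  obtain ⟨x, hx⟩ := exists_ker_toSpanSingleton_eq_annihilator F[X] (AEval' f)
  refine ⟨(AEval'.of f).symm x, fun r => ?_⟩
  rw [← minpoly.dvd_iff, ← Ideal.mem_span_singleton, span_minpoly_eq_annihilator, ← hx,
    LinearMap.mem_ker, LinearMap.toSpanSingleton_apply, ← (AEval'.of f).symm.map_eq_zero_iff]
  rfl

theorem exists_linearIndependent_pow_apply [FiniteDimensional F V] (f : End F V) :
    ∃ v : V, LinearIndependent F fun i : Fin (minpoly F f).natDegree => (f ^ (i : ℕ)) v := by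
  obtain ⟨v, hv⟩ := exists_forall_aeval_apply_eq_zero_iff f
  refine ⟨v, Fintype.linearIndependent_iff.mpr fun c hc => ?_⟩
  have haeval : aeval f (∑ i, C (c i) * X ^ (i : ℕ)) = ∑ i, c i • f ^ (i : ℕ) := by
    simp [Algebra.smul_def]
  refine Fintype.linearIndependent_iff.mp (linearIndependent_pow f) c ?_
  rw [← haeval, ← hv, haeval, LinearMap.sum_apply]
  exact hc

theorem exists_dual_apply_eq_of_linearIndependent {ι : Type*} {v : ι → V}
    (hv : LinearIndependent F v) (c : ι → F) : ∃ ψ : Dual F V, ∀ i, ψ (v i) = c i := by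
  obtain ⟨ψ, hψ⟩ := ((Basis.span hv).constr F c).exists_extend
  refine ⟨ψ, fun i => ?_⟩
  have h := LinearMap.congr_fun hψ (Basis.span hv i)
  rwa [Basis.constr_basis, LinearMap.comp_apply, Submodule.subtype_apply, Basis.span_apply] at h

theorem finrank_le_finrank_unobservableSubmodule_add_natDegree [FiniteDimensional F V] (f : End F V)
    (ψ : Dual F V) :
    finrank F V ≤ finrank F (unobservableSubmodule f ψ) + (minpoly F f).natDegree := by
  let Φ : V →ₗ[F] Fin (minpoly F f).natDegree → F := .pi fun i => ψ ∘ₗ f ^ (i : ℕ)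
  have hker : unobservableSubmodule f ψ = LinearMap.ker Φ :=
    unobservableSubmodule_eq_ker (Algebra.IsIntegral.isIntegral f) ψ
  rw [hker, ← Φ.finrank_range_add_finrank_ker, add_comm]
  gcongr
  simpa using Submodule.finrank_le (LinearMap.range Φ)

theorem exists_isCompl_invtSubmodule_basis_shift [FiniteDimensional F V] (f : End F V) {n : ℕ}
    (hd : (minpoly F f).natDegree = n + 1) :
    ∃ p ∈ f.invtSubmodule, ∃ q ∈ f.invtSubmodule, IsCompl p q ∧
      ∃ b : Basis (Fin (n + 1)) F q, ∀ i : Fin n, f (b i.castSucc) = b i.succ := by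
  have hf : IsIntegral F f := Algebra.IsIntegral.isIntegral f
  obtain ⟨v, hv⟩ := exists_linearIndependent_pow_apply f
  have hspan := cyclicSubmodule_eq_span hf v
  have hrank := finrank_le_finrank_unobservableSubmodule_add_natDegree f
  rw [hd] at hv hspan
  obtain ⟨ψ, hψ⟩ := exists_dual_apply_eq_of_linearIndependent hv (Pi.single (Fin.last n) 1)
  have hdisj : Disjoint (unobservableSubmodule f ψ) (cyclicSubmodule f v) := by
    refine disjoint_unobservableSubmodule_cyclicSubmodule hf hd (fun i hi => ?_) ?_
    · simpa [Fin.ext_iff, hi.ne] using hψ ⟨i, hi.trans n.lt_succ_self⟩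
    · simpa using hψ (Fin.last n)
  let b := (Basis.span hv).map (LinearEquiv.ofEq _ _ hspan.symm)
  have hb (i : Fin (n + 1)) : (b i : V) = (f ^ (i : ℕ)) v := by simp [b, Basis.span_apply]
  refine ⟨_, unobservableSubmodule_mem_invtSubmodule f ψ, _, cyclicSubmodule_mem_invtSubmodule f v,
    ⟨hdisj, codisjoint_iff.mpr (Submodule.eq_top_of_disjoint _ _ ?_ hdisj)⟩, b, fun i => ?_⟩
  · simpa [finrank_eq_card_basis b, hd] using hrank ψ
  · simp [hb, pow_succ']

theorem two_le_natDegree_minpoly_of_ne_smul_id [FiniteDimensional F V] {f : End F V}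
    (hf : ∀ c : F, f ≠ c • LinearMap.id) : 2 ≤ (minpoly F f).natDegree := by
  have : Nontrivial (End F V) := ⟨f, 0, by simpa using hf 0⟩
  rw [minpoly.two_le_natDegree_iff (Algebra.IsIntegral.isIntegral f)]
  rintro ⟨c, hc⟩
  exact hf c (by rw [← hc]; rfl)

end Cyclic

section Block

open Module

variable {R M : Type*} [CommRing R] [AddCommGroup M] [Module R M]

/-- The projection onto the span of the `b i` with `P i` that kills the other basis vectors. -/
noncomputable def coordProjection {ι : Type*} (b : Basis ι R M) (P : ι → Prop) [DecidablePred P] :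
    End R M :=
  b.constr R fun i => if P i then b i else 0

section CoordProjection

variable {ι : Type*} (b : Basis ι R M) (P : ι → Prop) [DecidablePred P]

theorem coordProjection_basis (i : ι) : coordProjection b P (b i) = if P i then b i else 0 :=
  b.constr_basis R _ i

theorem isIdempotentElem_coordProjection : IsIdempotentElem (coordProjection b P) :=
  b.ext fun i => by by_cases h : P i <;> simp [coordProjection_basis, h]

theorem repr_coordProjection (x : M) (i : ι) :
    b.repr (coordProjection b P x) i = if P i then b.repr x i else 0 := by
  suffices h : b.coord i ∘ₗ coordProjection b P = if P i then b.coord i else 0 by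
    have := LinearMap.congr_fun h x
    split_ifs at this ⊢ <;> exact this
  refine b.ext fun j => ?_
  obtain rfl | hij := eq_or_ne j i
  · by_cases hj : P j <;> simp [coordProjection_basis, hj]
  · by_cases hi : P i <;> by_cases hj : P j <;> simp [coordProjection_basis, hi, hj, hij]

end CoordProjection

theorem isRankOneSplitting_of_shift {g N : End R M} {k : ℕ} (b : Basis (Fin (k + 1)) R M)
    (hb : ∀ i : Fin k, (g - N) (b i.castSucc) = b i.succ) :
    IsRankOneSplitting g N (coordProjection b fun i => Even (i + k : ℕ))
      (coordProjection b (fun i => Even (i + k : ℕ)) ((g - N) (b (Fin.last k))))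
      (b.coord (Fin.last k)) := by
  -- `i + k` has the parity of `k - i`, so the last basis vector has even degree.
  obtain ⟨T, hT⟩ : ∃ T, T = g - N := ⟨_, rfl⟩
  rw [← hT] at hb ⊢
  have hidem := isIdempotentElem_coordProjection b fun i => Even (i + k : ℕ)
  have hproj := coordProjection_basis b fun i => Even (i + k : ℕ)
  refine ⟨hidem, LinearMap.congr_fun hidem _, fun x => by simp [repr_coordProjection], ?_⟩
  rw [← hT]
  refine b.ext fun i => ?_
  induction i using Fin.lastCases with
  | last => simpa [hproj] using LinearMap.congr_fun hidem (T (b (Fin.last k)))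
  | cast i =>
    have hparity : Even (i + 1 + k : ℕ) ↔ ¬Even (i + k : ℕ) := by grind
    by_cases hi : Even (i + k : ℕ) <;> simp [hproj, hb, hparity, hi]

theorem exists_basis_shift_sub_smulRight {g : End R M} {k : ℕ} (b : Basis (Fin (k + 2)) R M)
    (hb : ∀ i : Fin (k + 1), g (b i.castSucc) = b i.succ) (a : R) :
    ∃ b' : Basis (Fin (k + 2)) R M, ∀ i : Fin (k + 1),
      (g - (b'.coord (Fin.last k).castSucc).smulRight (a • b' (Fin.last k).castSucc))
        (b' i.castSucc) = b' i.succ := by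
  have h0 : b.coord (Fin.last (k + 1)) (-a • b (Fin.last k).castSucc) = 0 := by simp
  refine ⟨b.map (LinearEquiv.transvection h0), fun i => ?_⟩
  rw [LinearMap.sub_apply, LinearMap.smulRight_apply, Basis.coord_apply, Basis.repr_self]
  by_cases hi : i = Fin.last k
  · subst hi
    simp [LinearMap.transvection.apply, hb, sub_eq_add_neg]
  · have : i.succ ≠ Fin.last (k + 1) := by rwa [← Fin.succ_last, Ne, Fin.succ_inj]
    simp [LinearMap.transvection.apply, hb, this, hi]

theorem hasOppositeRankOneSplitting_of_shift {g : End R M} {k : ℕ} (b : Basis (Fin (k + 2)) R M)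
    (hb : ∀ i : Fin (k + 1), g (b i.castSucc) = b i.succ) (a : R) :
    HasOppositeRankOneSplitting g a := by
  obtain ⟨b, hb⟩ := exists_basis_shift_sub_smulRight b hb a
  refine ⟨_, _, _, _, _, isRankOneSplitting_of_shift b hb, ?_, ?_, ?_⟩
  · simp [coordProjection_basis]
  · simp [repr_coordProjection]
  · simp

end Block

section Main

open Module

variable {F V : Type*} [Field F] [AddCommGroup V] [Module F V]

theorem hasSquareZeroSplitting [CharP F 2] [FiniteDimensional F V] (f : End F V) :
    HasSquareZeroSplitting f := by
  induction hn : finrank F V using Nat.strong_induction_on generalizing V with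
  | _ n ih =>
    by_cases hf : ∃ c : F, f = c • LinearMap.id
    · obtain ⟨c, rfl⟩ := hf
      exact hasSquareZeroSplitting_smul_id c
    obtain ⟨k, hk⟩ :=
      Nat.exists_eq_add_of_le' (two_le_natDegree_minpoly_of_ne_smul_id (not_exists.mp hf))
    obtain ⟨p, hp, q, hq, hpq, b, hb⟩ := exists_isCompl_invtSubmodule_basis_shift f hk
    rw [End.mem_invtSubmodule_iff_forall_mem_of_mem] at hp hq
    have hlt : finrank F p < n := by
      rw [← hn, ← Submodule.finrank_add_eq_of_isCompl hpq, finrank_eq_card_basis b,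
        Fintype.card_fin]
      lia
    have hfp : HasSquareZeroSplitting (f.restrict hp) := ih _ hlt _ rfl
    have hfq := hasOppositeRankOneSplitting_of_shift (g := f.restrict hq) b
      fun i => Subtype.ext (hb i)
    refine (hfp.prodMap hfq).of_equiv (p.prodEquivOfIsCompl q hpq) fun x => ?_
    simp

theorem trace_zero_sum_three_square_zero_char_two_general {F ι : Type*} [Field F] [CharP F 2]
    [Fintype ι] [DecidableEq ι] (A : Matrix ι ι F) (hA : A.trace = 0) :
    ∃ B C D : Matrix ι ι F, B ^ 2 = 0 ∧ C ^ 2 = 0 ∧ D ^ 2 = 0 ∧ A = B + C + D := by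
  obtain ⟨g, h, k, hg, hh, hk, hsum⟩ :=
    (hasSquareZeroSplitting (Matrix.toLin' A)).exists_add_add_of_trace_eq_zero
      (by rw [Matrix.trace_toLin'_eq, hA])
  have sq_eq_zero {l : End F (ι → F)} (hl : l ^ 2 = 0) :
      LinearMap.toMatrixAlgEquiv' l ^ 2 = 0 := by
    rw [← map_pow, hl, map_zero]
  refine ⟨_, _, _, sq_eq_zero hg, sq_eq_zero hh, sq_eq_zero hk, ?_⟩
  rw [← map_add, ← map_add, ← hsum]
  exact (LinearMap.toMatrix'_toLin' A).symm

end Main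

/-- Over a field of characteristic 2, every trace-zero square matrix is the
sum of three square-zero matrices. -/
theorem trace_zero_sum_three_square_zero_char_two (F : Type*) [Field F] [CharP F 2]
    (n : ℕ) (A : Matrix (Fin n) (Fin n) F) (hA : A.trace = 0) :
    ∃ B C D : Matrix (Fin n) (Fin n) F,
      B ^ 2 = 0 ∧ C ^ 2 = 0 ∧ D ^ 2 = 0 ∧ A = B + C + D :=
  trace_zero_sum_three_square_zero_char_two_general A hA
end

section
/- Let F be a field of characteristic 2 and A ∈ Mat_n(F) a matrix whose trace is 0 or 1. Then A ⊕ 0_n is the sum of three idempotent matrices in Mat_{2n}(F). -/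
/-!
If `c * a + d * b = 1`, then `[a; b] * [c, d]` is an idempotent whose diagonal blocks add up to
`a * c + b * d`. Factor `A = G * H` through its rank `r`. As soon as `H * G` is the sum of the
diagonal blocks of an idempotent `P`, the matrix `A ⊕ 0` is similar to one whose diagonal blocks are
those of an idempotent lifting `P`; in characteristic `2` the off-diagonal blocks are then corrected
at will by the two further idempotents `[[1, X], [0, 0]]` and `[[1, 0], [Y, 0]]`.

Since `tr (H * G) = tr A` is `0` or `1`, it equals `r` or `r + 1` in characteristic `2`. In the
first case `H * G - 1` has trace zero, so it is a commutator `⁅s, v⁆` (Albert–Muckenhoupt) and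
`H * G = 1 * (1 - v * s) + s * v`. In the second case `H * G - 1 = e₀ * x + ⁅N, v⁆` with `N` the
shift, `v * e₀ = 0` and `x * e₀ = 1`, and `H * G = [1, 0] * [1 - v * N; -x * N] + [N, e₀] * [v; x]`.
-/

namespace ThreeIdempotents

open Matrix

section Shift

variable {R : Type*}

/-- The nilpotent lower shift matrix, with ones just below the diagonal: it sends the basis vector
`e j` to `e (j + 1)`, and the last one to `0`. It serves as a fixed entry of the commutators
constructed below. -/
def lowerShift (R : Type*) [Zero R] [One R] (n : ℕ) : Matrix (Fin n) (Fin n) R :=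
  of fun i j => if (i : ℕ) = j + 1 then 1 else 0

section Semiring

variable [Semiring R] {m : ℕ}

lemma lowerShift_mulVec_zero (v : Fin (m + 1) → R) : (lowerShift R (m + 1) *ᵥ v) 0 = 0 := by
  simp [lowerShift, mulVec, dotProduct]

lemma lowerShift_mulVec_succ (v : Fin (m + 1) → R) (i : Fin m) :
    (lowerShift R (m + 1) *ᵥ v) i.succ = v i.castSucc := by
  simp [lowerShift, mulVec, dotProduct, Fin.sum_univ_castSucc, Fin.val_inj, i.isLt.ne]

lemma vecMul_lowerShift_castSucc (v : Fin (m + 1) → R) (j : Fin m) :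
    (v ᵥ* lowerShift R (m + 1)) j.castSucc = v j.succ := by
  simp [lowerShift, vecMul, dotProduct, Fin.sum_univ_succ, Fin.val_inj]

lemma vecMul_lowerShift_last (v : Fin (m + 1) → R) :
    (v ᵥ* lowerShift R (m + 1)) (Fin.last m) = 0 := by
  simp [lowerShift, vecMul, dotProduct, Fin.sum_univ_succ, fun i : Fin m => i.isLt.ne]

lemma replicateRow_mul_replicateCol_single {ι : Type*} [Fintype ι] [DecidableEq ι] (i : ι)
    (x : ι → R) :
    replicateRow Unit x * replicateCol Unit (Pi.single i (1 : R)) = of fun (_ _ : Unit) => x i := by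
  ext
  rw [replicateRow_mul_replicateCol_apply, dotProduct_single_one, of_apply]

lemma lowerShift_pow_mulVec_single_zero (i : Fin (m + 1)) (a : R) :
    lowerShift R (m + 1) ^ (i : ℕ) *ᵥ Pi.single 0 a = Pi.single i a := by
  induction i using Fin.induction with
  | zero => rw [Fin.val_zero, pow_zero, one_mulVec]
  | succ i ih =>
    rw [Fin.val_castSucc] at ih
    rw [Fin.val_succ, pow_succ', ← mulVec_mulVec, ih]
    ext k
    cases k using Fin.cases with
    | zero => simp [lowerShift_mulVec_zero, (Fin.succ_ne_zero i).symm]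
    | succ k => simp [lowerShift_mulVec_succ, Pi.single_apply]

lemma last_eq_sum_pow_mulVec_of_succ_eq {ι : Type*} [Fintype ι] [DecidableEq ι]
    (N : Matrix ι ι R) {n : ℕ} (u : Fin n → ι → R) (c : Fin (n + 1) → ι → R) (hzero : c 0 = 0)
    (hsucc : ∀ j, c j.succ = N *ᵥ c j.castSucc + u j) :
    c (Fin.last n) = ∑ j, N ^ (j.rev : ℕ) *ᵥ u j := by
  induction n with
  | zero => simpa using hzero
  | succ n ih =>
    have hlast := ih (fun j => u j.castSucc) (fun j => c j.castSucc) hzero fun j => by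
      simpa using hsucc j.castSucc
    rw [← Fin.succ_last, hsucc, hlast, Fin.sum_univ_castSucc, mulVec_sum]
    simp only [Fin.rev_castSucc, Fin.val_succ, pow_succ', mulVec_mulVec, Fin.rev_last,
      Fin.val_zero, pow_zero, one_mulVec]

end Semiring

/-
Column by column, the equation reads `c (j + 1) = N *ᵥ c j + (x j • e₀ - h j)` for the columns `c j`
of `v`, started and ended at `0`; the end condition `∑ N ^ (m - j) *ᵥ (x j • e₀ - h j) = 0` can be
solved for `x` because the vectors `N ^ (m - j) *ᵥ e₀` are the standard basis.
-/
theorem exists_eq_vecMulVec_add_lie_lowerShift [Ring R] {m : ℕ}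
    (h : Matrix (Fin (m + 1)) (Fin (m + 1)) R) :
    ∃ (x : Fin (m + 1) → R) (v : Matrix (Fin (m + 1)) (Fin (m + 1)) R),
      v *ᵥ Pi.single 0 1 = 0 ∧ h = vecMulVec (Pi.single 0 1) x + ⁅lowerShift R (m + 1), v⁆ := by
  set N := lowerShift R (m + 1)
  let y : Fin (m + 1) → R := ∑ j, N ^ (j.rev : ℕ) *ᵥ h.col j
  let u (j : Fin (m + 1)) : Fin (m + 1) → R := Pi.single 0 (y j.rev) - h.col j
  let c : Fin (m + 2) → Fin (m + 1) → R := Fin.induction 0 fun j c => N *ᵥ c + u j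
  have hsucc (j) : c j.succ = N *ᵥ c j.castSucc + u j := rfl
  have hsum : ∑ j : Fin (m + 1), N ^ (j.rev : ℕ) *ᵥ Pi.single 0 (y j.rev) = y := by
    simp only [N, lowerShift_pow_mulVec_single_zero]
    exact (Equiv.sum_comp Fin.revPerm fun j => Pi.single j (y j)).trans (Finset.univ_sum_single y)
  have hlast : c (Fin.last _) = 0 := by
    rw [last_eq_sum_pow_mulVec_of_succ_eq N u c rfl hsucc]
    simp only [u, mulVec_sub, Finset.sum_sub_distrib, hsum, y, sub_self]
  let v : Matrix (Fin (m + 1)) (Fin (m + 1)) R := of fun i j => c j.castSucc i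
  have hNv (i j) : (N * v) i j = (N *ᵥ c j.castSucc) i := rfl
  have hvN (i j) : (v * N) i j = c j.succ i := by
    rw [mul_apply_eq_vecMul]
    cases j using Fin.lastCases with
    | last => rw [vecMul_lowerShift_last, Fin.succ_last, hlast, Pi.zero_apply]
    | cast j => exact vecMul_lowerShift_castSucc _ j
  refine ⟨fun j => y j.rev, v, mulVec_single_one v 0, ?_⟩
  ext i j
  have hu : u j i = (Pi.single 0 1 : Fin (m + 1) → R) i * y j.rev - h i j := by
    simp [u, Pi.single_apply]
  simp only [Ring.lie_def, Matrix.add_apply, Matrix.sub_apply, vecMulVec_apply, hvN, hNv, hsucc,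
    Pi.add_apply, hu]
  abel

variable [CommRing R]

lemma isUnit_one_sub_lowerShift (n : ℕ) : IsUnit (1 - lowerShift R n) := by
  have hlower : (1 - lowerShift R n).IsLowerTriangular := fun i j (hij : i < j) => by
    have : ¬ (i : ℕ) = j + 1 := by omega
    simp [lowerShift, one_apply, hij.ne, this]
  rw [isUnit_iff_isUnit_det, det_of_isLowerTriangular _ hlower]
  simp [lowerShift]

lemma trace_vecMulVec_single_add_lie {ι : Type*} [Fintype ι] [DecidableEq ι] (i : ι) (x : ι → R)
    (s v : Matrix ι ι R) : (vecMulVec (Pi.single i 1) x + ⁅s, v⁆).trace = x i := by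
  rw [trace_add, trace_vecMulVec, LieAlgebra.matrix_trace_commutator_zero, add_zero,
    single_one_dotProduct]

end Shift

section Commutator

variable {R : Type*} [CommRing R]

lemma exists_smul_one_eq_lie {n : ℕ} {a : R} (ha : n * a = 0) :
    ∃ s v : Matrix (Fin n) (Fin n) R, a • (1 : Matrix (Fin n) (Fin n) R) = ⁅s, v⁆ := by
  obtain _ | m := n
  · exact ⟨0, 0, Subsingleton.elim _ _⟩
  let v : Matrix (Fin (m + 1)) (Fin (m + 1)) R :=
    of fun i j => if (i : ℕ) + 1 = j then -(j * a) else 0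
  have hNv (i j) : (lowerShift R (m + 1) * v) i j = if i = j then -(j * a) else 0 := by
    change (lowerShift R (m + 1) *ᵥ v.col j) i = _
    cases i using Fin.cases with
    | zero =>
      rw [lowerShift_mulVec_zero]
      split_ifs with hj
      · simp [← hj]
      · rfl
    | succ i => simp [lowerShift_mulVec_succ, v, Fin.ext_iff]
  have hvN (i j) : (v * lowerShift R (m + 1)) i j = if i = j then -((j + 1) * a) else 0 := by
    rw [mul_apply_eq_vecMul]
    cases j using Fin.lastCases with
    | last =>
      push_cast at ha
      simp [vecMul_lowerShift_last, ha]
    | cast j => simp [vecMul_lowerShift_castSucc, v, Fin.ext_iff]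
  refine ⟨lowerShift R (m + 1), v, ?_⟩
  ext i j
  rw [Ring.lie_def, Matrix.sub_apply, hNv, hvN, Matrix.smul_apply, one_apply, smul_eq_mul]
  split_ifs <;> ring

lemma exists_fromBlocks_neg_mul_eq_lie {μ κ : Type*} [Fintype μ] [Fintype κ] [DecidableEq κ]
    {N : Matrix κ κ R} (hN : IsUnit (1 - N)) (w : Matrix κ κ R) (g : Matrix κ μ R)
    (x y : Matrix μ κ R) :
    ∃ s v : Matrix (μ ⊕ κ) (μ ⊕ κ) R, fromBlocks (-(x * g)) y g (g * x + ⁅N, w⁆) = ⁅s, v⁆ := by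
  classical
  obtain ⟨D, rfl⟩ : ∃ D, N = 1 - D := ⟨1 - N, (sub_sub_cancel 1 N).symm⟩
  rw [sub_sub_cancel, isUnit_iff_isUnit_det] at hN
  -- For `s = [1, x * D; 0, N]` and `v = [0, b; c, d]`, the lower left, lower right and upper right
  -- blocks of the equation determine `c`, `d` and `b` in turn.
  refine ⟨fromBlocks 1 (x * D) 0 (1 - D),
    fromBlocks 0 ((y - x * D * (w - D⁻¹ * g * x)) * D⁻¹) (-(D⁻¹ * g)) (w - D⁻¹ * g * x), ?_⟩
  rw [Ring.lie_def, Ring.lie_def, eq_sub_iff_add_eq, fromBlocks_multiply, fromBlocks_multiply,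
    fromBlocks_add, fromBlocks_inj]
  refine ⟨?_, ?_, ?_, ?_⟩
  · simp only [mul_one, Matrix.mul_assoc, Matrix.mul_sub, mul_nonsing_inv_cancel_left _ _ hN,
      Matrix.sub_mul, Matrix.mul_zero, add_zero, mul_zero, Matrix.mul_neg, zero_add]
  · simp only [Matrix.zero_mul, Matrix.mul_assoc, Matrix.mul_sub, Matrix.sub_mul, Matrix.mul_one,
      mul_nonsing_inv_cancel_left _ _ hN, nonsing_inv_mul _ hN, mul_one, zero_add, Matrix.one_mul]
    abel
  · simp only [Matrix.mul_one, Matrix.mul_assoc, Matrix.mul_zero, add_zero, Matrix.mul_neg,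
      Matrix.sub_mul, Matrix.one_mul, mul_nonsing_inv_cancel_left _ _ hN, neg_sub, zero_add]
    abel
  · simp only [Matrix.sub_mul, one_mul, Matrix.mul_sub, mul_one, sub_sub_sub_cancel_left, zero_add,
      Matrix.neg_mul, Matrix.mul_assoc, mul_nonsing_inv_cancel_left _ _ hN, Matrix.zero_mul,
      sub_self]
    abel

lemma exists_fromBlocks_eq_lie_of_trace_eq_zero {m : ℕ} {c : Matrix Unit Unit R}
    {y : Matrix Unit (Fin (m + 1)) R} {h : Matrix (Fin (m + 1)) (Fin (m + 1)) R}
    (htr : (fromBlocks c y (replicateCol Unit (Pi.single 0 1)) h).trace = 0) :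
    ∃ s v : Matrix (Unit ⊕ Fin (m + 1)) (Unit ⊕ Fin (m + 1)) R,
      fromBlocks c y (replicateCol Unit (Pi.single 0 1)) h = ⁅s, v⁆ := by
  obtain ⟨x, w, -, rfl⟩ := exists_eq_vecMulVec_add_lie_lowerShift h
  have hc : c = -of fun (_ _ : Unit) => x 0 := by
    have hsum : c.trace + x 0 = 0 := by
      rw [← trace_vecMulVec_single_add_lie 0 x (lowerShift R (m + 1)) w]
      simpa [trace, Fintype.sum_sum_type] using htr
    ext
    simpa [trace] using eq_neg_of_add_eq_zero_left hsum
  rw [hc, vecMulVec_eq Unit, ← replicateRow_mul_replicateCol_single]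
  exact exists_fromBlocks_neg_mul_eq_lie (isUnit_one_sub_lowerShift _) w _ _ y

lemma exists_eq_lie_of_map_eq_lie {A B E : Type*} [Ring A] [Ring B] [EquivLike E A B]
    [RingEquivClass E A B] (e : E) {x : A} (h : ∃ s v : B, e x = ⁅s, v⁆) :
    ∃ s v : A, x = ⁅s, v⁆ := by
  obtain ⟨s, v, h⟩ := h
  obtain ⟨s, rfl⟩ := EquivLike.surjective e s
  obtain ⟨v, rfl⟩ := EquivLike.surjective e v
  exact ⟨s, v, EquivLike.injective e (by simpa only [Ring.lie_def, map_sub, map_mul] using h)⟩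

variable {K V : Type*} [Field K] [AddCommGroup V] [Module K V] [FiniteDimensional K V]

lemma exists_basis_of_linearIndependent_pair {x y : V} (h : LinearIndependent K ![x, y]) :
    ∃ (m : ℕ) (b : Module.Basis (Unit ⊕ Fin (m + 1)) K V),
      b (Sum.inl ()) = x ∧ b (Sum.inr 0) = y := by
  let κ := Module.Basis.sumExtendIndex h
  let b : Module.Basis (Fin 2 ⊕ κ) K V := Module.Basis.sumExtend h
  have hb (i) : b (Sum.inl i) = ![x, y] i := by
    simp only [b, Module.Basis.sumExtend, Module.Basis.reindex_apply]
    exact Module.Basis.extend_apply_self ..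
  have : Finite (Fin 2 ⊕ κ) := Module.Finite.finite_basis b
  have : Finite κ := Finite.sum_right (Fin 2)
  obtain ⟨m, ⟨e⟩⟩ := Finite.exists_equiv_fin κ
  let e' : Fin 2 ⊕ κ ≃ Unit ⊕ Fin (m + 1) :=
    (finSumFinEquiv (m := 1).symm.sumCongr e).trans <| (Equiv.sumAssoc _ _ _).trans <|
      (Equiv.ofUnique _ _).sumCongr (finSumFinEquiv.trans (finCongr (add_comm 1 m)))
  exact ⟨m, b.reindex e', (b.reindex_apply e' _).trans (hb 0), (b.reindex_apply e' _).trans (hb 1)⟩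

theorem exists_eq_lie_of_trace_eq_zero {f : Module.End K V} (hf : LinearMap.trace K V f = 0) :
    ∃ s v : Module.End K V, f = ⁅s, v⁆ := by
  by_cases hscalar : ∀ x, ¬LinearIndependent K ![x, f x]
  · obtain ⟨a, rfl⟩ := LinearMap.exists_eq_smul_id_of_forall_notLinearIndependent hscalar
    refine exists_eq_lie_of_map_eq_lie (LinearMap.toMatrixAlgEquiv (Module.finBasis K V)) ?_
    rw [map_smul, map_one]
    exact exists_smul_one_eq_lie (by simpa [mul_comm] using hf)
  · push Not at hscalar
    obtain ⟨x, hx⟩ := hscalar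
    obtain ⟨m, b, hbx, hbfx⟩ := exists_basis_of_linearIndependent_pair hx
    refine exists_eq_lie_of_map_eq_lie (LinearMap.toMatrixAlgEquiv b) ?_
    set M := LinearMap.toMatrixAlgEquiv b f
    have hcol : M.toBlocks₂₁ = replicateCol Unit (Pi.single 0 1) := by
      ext i
      simp [M, toBlocks₂₁, LinearMap.toMatrixAlgEquiv_apply, hbx, ← hbfx, Finsupp.single_apply,
        Pi.single_apply, eq_comm]
    have hM : M.trace = 0 := by rwa [LinearMap.trace_eq_matrix_trace K b] at hf
    rw [← fromBlocks_toBlocks M, hcol] at hM ⊢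
    exact exists_fromBlocks_eq_lie_of_trace_eq_zero hM

end Commutator

section PartialTrace

variable {R ι κ : Type*} [Fintype ι] [Fintype κ]

/-- `B` is the partial trace of an idempotent, that is, the sum of the two diagonal blocks of an
idempotent matrix of twice the size. This is the condition on `H * G` that makes `G * H ⊕ 0` a sum
of three idempotents. -/
def IsPartialTraceOfIdempotent [Semiring R] (B : Matrix ι ι R) : Prop :=
  ∃ P₁₁ P₁₂ P₂₁ P₂₂ : Matrix ι ι R,
    IsIdempotentElem (fromBlocks P₁₁ P₁₂ P₂₁ P₂₂) ∧ P₁₁ + P₂₂ = B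

lemma isPartialTraceOfIdempotent_mul_add_mul [Semiring R] [DecidableEq κ] {a b : Matrix ι κ R}
    {c d : Matrix κ ι R} (h : c * a + d * b = 1) : IsPartialTraceOfIdempotent (a * c + b * d) := by
  refine ⟨a * c, a * d, b * c, b * d, ?_, rfl⟩
  rw [← fromRows_mul_fromCols, IsIdempotentElem, Matrix.mul_assoc,
    ← Matrix.mul_assoc (fromCols c d), fromCols_mul_fromRows, h, Matrix.one_mul]

lemma isPartialTraceOfIdempotent_one_add_lie [Ring R] [DecidableEq ι] (s v : Matrix ι ι R) :
    IsPartialTraceOfIdempotent (1 + ⁅s, v⁆) := by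
  have h : (1 - v * s) * 1 + v * s = 1 := by rw [Matrix.mul_one, sub_add_cancel]
  convert isPartialTraceOfIdempotent_mul_add_mul h using 1
  rw [Matrix.one_mul, Ring.lie_def]
  abel

lemma isPartialTraceOfIdempotent_one_add_mul_add_lie [Ring R] [DecidableEq ι] [DecidableEq κ]
    {N v : Matrix ι ι R} {g : Matrix ι κ R} {x : Matrix κ ι R} (hv : v * g = 0) (hx : x * g = 1) :
    IsPartialTraceOfIdempotent (1 + g * x + ⁅N, v⁆) := by
  have h : fromRows (1 - v * N) (-(x * N)) * fromCols (1 : Matrix ι ι R) (0 : Matrix ι κ R) +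
      fromRows v x * fromCols N g = 1 := by
    rw [fromRows_mul_fromCols, fromRows_mul_fromCols, fromBlocks_add]
    simp [hv, hx]
  convert isPartialTraceOfIdempotent_mul_add_mul h using 1
  rw [fromCols_mul_fromRows, fromCols_mul_fromRows, Matrix.one_mul, Matrix.zero_mul, Ring.lie_def]
  abel

lemma isPartialTraceOfIdempotent_of_trace_eq_card [Field R] {B : Matrix ι ι R}
    (hB : B.trace = Fintype.card ι) : IsPartialTraceOfIdempotent B := by
  classical
  have htr : LinearMap.trace R _ (toLinAlgEquiv' (B - 1)) = 0 := by
    change LinearMap.trace R _ (toLin' (B - 1)) = 0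
    rw [trace_toLin'_eq, trace_sub, hB, trace_one, sub_self]
  have hlie := exists_eq_lie_of_trace_eq_zero htr
  obtain ⟨s, v, hsv⟩ := exists_eq_lie_of_map_eq_lie (x := B - 1) toLinAlgEquiv' hlie
  rw [← add_sub_cancel 1 B, hsv]
  exact isPartialTraceOfIdempotent_one_add_lie s v

lemma isPartialTraceOfIdempotent_of_trace_eq_add_one [CommRing R] {r : ℕ}
    {B : Matrix (Fin r) (Fin r) R} (hB : B.trace = r + 1) : IsPartialTraceOfIdempotent B := by
  obtain _ | m := r
  · exact ⟨0, 0, 0, 0, by simp [IsIdempotentElem], Subsingleton.elim _ _⟩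
  obtain ⟨x, v, hv, h⟩ := exists_eq_vecMulVec_add_lie_lowerShift (B - 1)
  have hx : x 0 = 1 := by
    rw [← trace_vecMulVec_single_add_lie 0 x (lowerShift R (m + 1)) v, ← h, trace_sub, hB,
      trace_one, Fintype.card_fin, add_sub_cancel_left]
  rw [vecMulVec_eq Unit, sub_eq_iff_eq_add', ← add_assoc] at h
  rw [h]
  refine isPartialTraceOfIdempotent_one_add_mul_add_lie ?_ ?_
  · rw [← replicateCol_mulVec, hv, replicateCol_zero]
  · rw [replicateRow_mul_replicateCol_single, hx]
    ext
    simp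

end PartialTrace

section SumOfThree

variable {R ι κ ρ : Type*} [Fintype ι] [Fintype κ] [Fintype ρ]

/-- `x` is a sum of three idempotents, which need not be distinct, orthogonal or nonzero. -/
def IsSumOfThreeIdempotents {M : Type*} [Add M] [Mul M] (x : M) : Prop :=
  ∃ p q r : M, IsIdempotentElem p ∧ IsIdempotentElem q ∧ IsIdempotentElem r ∧ x = p + q + r

lemma isIdempotentElem_mul_mul [Semiring R] [DecidableEq ι] {P : Matrix ι ι R}
    (hP : IsIdempotentElem P) {u : Matrix ι κ R} {v : Matrix κ ι R} (huv : u * v = 1) :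
    IsIdempotentElem (v * P * u) := by
  calc
    v * P * u * (v * P * u) = v * P * (u * v) * P * u := by simp only [Matrix.mul_assoc]
    _ = v * P * u := by rw [huv, Matrix.mul_one, Matrix.mul_assoc v, hP.eq]

lemma IsSumOfThreeIdempotents.mul_mul [Semiring R] [DecidableEq ι] {M : Matrix ι ι R}
    (hM : IsSumOfThreeIdempotents M) {u : Matrix ι κ R} {v : Matrix κ ι R} (huv : u * v = 1) :
    IsSumOfThreeIdempotents (v * M * u) := by
  obtain ⟨P, Q, S, hP, hQ, hS, rfl⟩ := hM
  refine ⟨v * P * u, v * Q * u, v * S * u, isIdempotentElem_mul_mul hP huv,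
    isIdempotentElem_mul_mul hQ huv, isIdempotentElem_mul_mul hS huv, ?_⟩
  simp only [Matrix.mul_add, Matrix.add_mul]

variable [Ring R]

lemma isSumOfThreeIdempotents_fromBlocks [CharP R 2] {P₁₁ : Matrix ι ι R} {P₁₂ : Matrix ι κ R}
    {P₂₁ : Matrix κ ι R} {P₂₂ : Matrix κ κ R} (hP : IsIdempotentElem (fromBlocks P₁₁ P₁₂ P₂₁ P₂₂))
    (X : Matrix ι κ R) (Y : Matrix κ ι R) :
    IsSumOfThreeIdempotents (fromBlocks P₁₁ X Y P₂₂) := by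
  classical
  refine ⟨fromBlocks 1 (X - P₁₂) 0 0, fromBlocks 1 0 (Y - P₂₁) 0, _, ?_, ?_, hP, ?_⟩
  · simp [IsIdempotentElem, fromBlocks_multiply]
  · simp [IsIdempotentElem, fromBlocks_multiply]
  · have htwo : (1 : Matrix ι ι R) + 1 = 0 := by
      ext
      exact CharTwo.add_self_eq_zero _
    simp [fromBlocks_add, htwo]

lemma exists_fromBlocks_zero_eq_conj [DecidableEq ι] [DecidableEq κ] (A : Matrix ι ι R)
    (W : Matrix ι κ R) (Z : Matrix κ ι R) :
    ∃ u v : Matrix (ι ⊕ κ) (ι ⊕ κ) R, u * v = 1 ∧ fromBlocks A 0 0 0 =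
      v * fromBlocks (A + W * Z * A) (-((A + W * Z * A) * W)) (Z * A) (-(Z * A * W)) * u := by
  refine ⟨fromBlocks (1 + W * Z) W Z 1, fromBlocks 1 (-W) (-Z) (1 + Z * W), ?_, ?_⟩
  · simp [fromBlocks_multiply, Matrix.mul_add, Matrix.add_mul, Matrix.mul_assoc]
  · rw [fromBlocks_multiply, fromBlocks_multiply, fromBlocks_inj]
    simp only [Matrix.mul_add, Matrix.add_mul, Matrix.mul_assoc, Matrix.one_mul, Matrix.mul_one,
      Matrix.neg_mul, Matrix.mul_neg]
    refine ⟨?_, ?_, ?_, ?_⟩ <;> abel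

theorem isSumOfThreeIdempotents_fromBlocks_mul_zero [CharP R 2] [DecidableEq ρ] {G K : Matrix ι ρ R}
    {H L : Matrix ρ ι R} (hLG : L * G = 1) (hHK : H * K = 1) {H' : Matrix ρ κ R}
    {K' : Matrix κ ρ R} (hHK' : H' * K' = 1) (hHG : IsPartialTraceOfIdempotent (H * G)) :
    IsSumOfThreeIdempotents (fromBlocks (G * H) 0 0 (0 : Matrix κ κ R)) := by
  classical
  obtain ⟨P₁₁, P₁₂, P₂₁, P₂₂, hP, hPHG⟩ := hHG
  have hlift : IsIdempotentElem
      (fromBlocks (K * P₁₁ * H) (K * P₁₂ * H') (K' * P₂₁ * H) (K' * P₂₂ * H')) := by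
    have hdiag : fromBlocks H 0 0 H' * fromBlocks K 0 0 K' = 1 := by
      simp [fromBlocks_multiply, hHK, hHK']
    simpa [fromBlocks_multiply] using isIdempotentElem_mul_mul hP hdiag
  let Z := K' * L
  let W := (K * P₁₁ - G) * H'
  have hZ : Z * (G * H) = K' * H := by
    rw [Matrix.mul_assoc, ← Matrix.mul_assoc L, hLG, Matrix.one_mul]
  have h₁₁ : G * H + W * Z * (G * H) = K * P₁₁ * H := by
    rw [Matrix.mul_assoc W, hZ, Matrix.mul_assoc _ H', ← Matrix.mul_assoc H', hHK',
      Matrix.one_mul, ← Matrix.add_mul, add_sub_cancel]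
  have h₂₂ : -(Z * (G * H) * W) = K' * P₂₂ * H' := by
    have hHW : H * W = -(P₂₂ * H') := by
      rw [← Matrix.mul_assoc, Matrix.mul_sub, ← Matrix.mul_assoc, hHK, Matrix.one_mul, ← hPHG,
        sub_add_cancel_left, Matrix.neg_mul]
    rw [hZ, Matrix.mul_assoc, hHW, Matrix.mul_neg, neg_neg, Matrix.mul_assoc]
  obtain ⟨u, v, huv, hconj⟩ := exists_fromBlocks_zero_eq_conj (G * H) W Z
  rw [hconj, h₁₁, h₂₂]
  exact (isSumOfThreeIdempotents_fromBlocks hlift _ _).mul_mul huv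

end SumOfThree

section Factorization

variable {ι κ : Type*} [Fintype ι] [Fintype κ]

lemma exists_mul_eq_one_of_card_le (R : Type*) [Semiring R] [DecidableEq ι]
    (h : Fintype.card ι ≤ Fintype.card κ) :
    ∃ (u : Matrix ι κ R) (v : Matrix κ ι R), u * v = 1 := by
  classical
  obtain ⟨e⟩ := Function.Embedding.nonempty_of_card_le h
  refine ⟨(1 : Matrix κ κ R).submatrix e id, (1 : Matrix κ κ R).submatrix id e, ?_⟩
  rw [← submatrix_mul _ _ _ _ _ Function.bijective_id, Matrix.one_mul, submatrix_one_embedding]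

lemma exists_rank_factorization {K : Type*} [Field K] (A : Matrix ι κ K) :
    ∃ (G : Matrix ι (Fin A.rank) K) (H : Matrix (Fin A.rank) κ K) (G' : Matrix (Fin A.rank) ι K)
      (H' : Matrix κ (Fin A.rank) K), A = G * H ∧ G' * G = 1 ∧ H * H' = 1 := by
  classical
  let e : LinearMap.range A.mulVecLin ≃ₗ[K] (Fin A.rank → K) := (Module.finBasis K _).equivFun
  let h : (κ → K) →ₗ[K] (Fin A.rank → K) := e.toLinearMap ∘ₗ A.mulVecLin.rangeRestrict
  let g : (Fin A.rank → K) →ₗ[K] (ι → K) := Submodule.subtype _ ∘ₗ e.symm.toLinearMap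
  have hh : LinearMap.range h = ⊤ :=
    LinearMap.range_eq_top.2 (e.surjective.comp A.mulVecLin.surjective_rangeRestrict)
  have hg : LinearMap.ker g = ⊥ :=
    LinearMap.ker_eq_bot.2 (Subtype.val_injective.comp e.symm.injective)
  obtain ⟨h', hh'⟩ := h.exists_rightInverse_of_surjective hh
  obtain ⟨g', hg'⟩ := g.exists_leftInverse_of_injective hg
  have hA : A.toLin' = g ∘ₗ h := LinearMap.ext fun x => by simp [g, h]
  refine ⟨g.toMatrix', h.toMatrix', g'.toMatrix', h'.toMatrix', ?_, ?_, ?_⟩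
  · rw [← LinearMap.toMatrix'_comp, ← hA, LinearMap.toMatrix'_toLin']
  · rw [← LinearMap.toMatrix'_comp, hg', LinearMap.toMatrix'_id]
  · rw [← LinearMap.toMatrix'_comp, hh', LinearMap.toMatrix'_id]

end Factorization

end ThreeIdempotents

open Matrix ThreeIdempotents in
theorem trace_zero_or_one_oplus_zero_sum_three_idempotents_general {F ι κ : Type*} [Field F]
    [CharP F 2] [Fintype ι] [Fintype κ] {A : Matrix ι ι F} (hrank : A.rank ≤ Fintype.card κ)
    (hA : A.trace = 0 ∨ A.trace = 1) :
    IsSumOfThreeIdempotents (fromBlocks A 0 0 (0 : Matrix κ κ F)) := by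
  classical
  obtain ⟨G, H, L, K, hGH, hLG, hHK⟩ := exists_rank_factorization A
  obtain ⟨H', K', hHK'⟩ := exists_mul_eq_one_of_card_le F ((Fintype.card_fin A.rank).trans_le hrank)
  generalize A.rank = r at *
  subst hGH
  refine isSumOfThreeIdempotents_fromBlocks_mul_zero hLG hHK hHK' ?_
  rw [trace_mul_comm] at hA
  have htrace : (H * G).trace = r ∨ (H * G).trace = r + 1 := by
    rcases CharTwo.natCast_cases (R := F) r with h | h <;> rw [h]
    · simpa using hA
    · simpa [one_add_one_eq_two, CharTwo.two_eq_zero] using hA.symm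
  rcases htrace with htrace | htrace
  · exact isPartialTraceOfIdempotent_of_trace_eq_card (by rwa [Fintype.card_fin])
  · exact isPartialTraceOfIdempotent_of_trace_eq_add_one htrace

/-- Over a field of characteristic 2, if `A` has trace `0` or `1`, then
`A ⊕ 0ₙ` is the sum of three idempotent matrices. -/
theorem trace_zero_or_one_oplus_zero_sum_three_idempotents (F : Type*) [Field F]
    [CharP F 2] (n : ℕ) (A : Matrix (Fin n) (Fin n) F)
    (hA : A.trace = 0 ∨ A.trace = 1) :
    ∃ P Q R : Matrix (Fin n ⊕ Fin n) (Fin n ⊕ Fin n) F,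
      P ^ 2 = P ∧ Q ^ 2 = Q ∧ R ^ 2 = R ∧
      Matrix.fromBlocks A 0 0 (0 : Matrix (Fin n) (Fin n) F) = P + Q + R := by
  simpa only [ThreeIdempotents.IsSumOfThreeIdempotents, IsIdempotentElem, ← sq] using
    trace_zero_or_one_oplus_zero_sum_three_idempotents_general A.rank_le_card_height hA
end

section
/- For every matrix M ∈ Mat_n(F), all the invariant factors of the block matrix D(M) = [[0_n, M], [I_n, 0_n]] ∈ Mat_{2n}(F) are even polynomials (i.e., polynomials in t²). -/
open Polynomial

/-- The companion matrix of a monic polynomial of degree `n`. -/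
def companion {F : Type*} [Field F] (n : ℕ) (p : Polynomial F) :
    Matrix (Fin n) (Fin n) F := fun i j =>
  if (j : ℕ) = n - 1 then -(p.coeff i)
  else if (i : ℕ) = (j : ℕ) + 1 then 1 else 0

/-- `l` is the list of invariant factors of the square matrix `A`: the entries
are monic, each divides the previous one, and `A` is similar to the
block-diagonal direct sum of their companion matrices. -/
def IsInvFactors {F : Type*} [Field F] {m : Type*} [Fintype m] [DecidableEq m]
    (A : Matrix m m F) (l : List (Polynomial F)) : Prop :=
  (∀ p ∈ l, p.Monic) ∧ l.Chain' (fun a b => b ∣ a) ∧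
  ∃ e : m ≃ (Σ i : Fin l.length, Fin ((l.get i).natDegree)),
  ∃ P : (Matrix m m F)ˣ,
    A = (P : Matrix m m F) *
        (Matrix.reindex e.symm e.symm
          (Matrix.blockDiagonal' fun i => companion ((l.get i).natDegree) (l.get i))) *
        ((↑P⁻¹ : Matrix m m F))

/-!
Let `D = [[0, M], [I, 0]]` act on `V = U × U`. The invariant factors are read off from exterior
powers: if `V ≃ ∏ F[X] ⧸ (sᵢ)` with `sᵢ₊₁ ∣ sᵢ` for `i ≥ 0`, then `(sₖ)` is the annihilator of
the `(k + 1)`-st exterior power of the `F[X]`-module `V`. Since `D` is off-diagonal, `D²` preserves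
`U × 0` and `V` is the extension of scalars from `F[X²]` to `F[X]` of the `F[X²]`-module `U × 0`. As
`F[X]` is free over `F[X²]`, annihilators of exterior powers commute with this extension, so `(sₖ)`
is generated by an ideal of the principal ideal ring `F[X²]`, and `sₖ` is a scalar multiple of an
even polynomial.
-/

open scoped TensorProduct

section ExteriorPower

variable {R : Type*} [CommRing R]

/-- An `S`-alternating map regarded as an `R`-alternating map, for an `R`-algebra `S`. -/
def alternatingMapRestrictScalars (R : Type*) {S M N ι : Type*} [CommSemiring R] [CommSemiring S]
    [AddCommMonoid M] [AddCommMonoid N] [Algebra R S] [Module R M] [Module S M]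
    [IsScalarTower R S M] [Module R N] [Module S N] [IsScalarTower R S N]
    (f : M [⋀^ι]→ₗ[S] N) : M [⋀^ι]→ₗ[R] N where
  __ := f.toMultilinearMap.restrictScalars R
  map_eq_zero_of_eq' := f.map_eq_zero_of_eq'

theorem mem_annihilator_exteriorPower_iff {M : Type*} [AddCommGroup M] [Module R M] {n : ℕ}
    {s : Set M} (hs : Submodule.span R s = ⊤) {r : R} :
    r ∈ Module.annihilator R (⋀[R]^n M) ↔
      ∀ v : Fin n → M, (∀ i, v i ∈ s) → r • exteriorPower.ιMulti R n v = 0 := by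
  rw [← Submodule.annihilator_top, ← exteriorPower.ιMulti_span_of_span R n M hs,
    Submodule.mem_annihilator_span]
  simp [Set.range_subset_iff]

theorem exists_le_apply_of_injective {N : ℕ} {k : Fin N} {r : Fin (k + 1) → Fin N}
    (hr : Function.Injective r) : ∃ j, k ≤ r j := by
  by_contra! hlt
  have hcard := Fintype.card_le_of_injective (fun j => (⟨r j, hlt j⟩ : Fin k))
    fun i j hij => hr (Fin.ext (by simpa using hij))
  simp at hcard

variable {M : Type*} [AddCommGroup M] [Module R M] {N : ℕ} {I : Fin N → Ideal R}

theorem span_range_single_one_quotient {ι : Type*} [Finite ι] [DecidableEq ι] (I : ι → Ideal R) :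
    Submodule.span R (Set.range fun i => Pi.single (M := fun i => R ⧸ I i) i 1) = ⊤ := by
  have := Fintype.ofFinite ι
  refine Submodule.eq_top_iff'.2 fun x => ?_
  rw [← Finset.univ_sum_single x]
  refine Submodule.sum_mem _ fun i _ => ?_
  obtain ⟨r, hr⟩ := Ideal.Quotient.mk_surjective (x i)
  have hsmul : Pi.single i (x i) = r • Pi.single (M := fun i => R ⧸ I i) i 1 := by
    rw [← hr, ← Pi.single_smul, Algebra.smul_def, mul_one]
    rfl
  exact hsmul ▸ Submodule.smul_mem _ r (Submodule.subset_span ⟨i, rfl⟩)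

theorem le_annihilator_exteriorPower (hI : Monotone I) (e : M ≃ₗ[R] (∀ i, R ⧸ I i)) (k : Fin N) :
    I k ≤ Module.annihilator R (⋀[R]^(k + 1) M) := by
  intro q hq
  have hspan : Submodule.span R (Set.range fun i => e.symm (Pi.single i 1)) = ⊤ := by
    rw [Set.range_comp' e.symm, ← LinearEquiv.coe_coe, ← Submodule.map_span,
      span_range_single_one_quotient, Submodule.map_top, LinearEquiv.range]
  rw [mem_annihilator_exteriorPower_iff hspan]
  intro v hv
  choose r hr using hv
  obtain rfl : (fun j => e.symm (Pi.single (r j) 1)) = v := funext hr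
  by_cases hinj : Function.Injective r
  · obtain ⟨j, hj⟩ := exists_le_apply_of_injective hinj
    have hzero : q • e.symm (Pi.single (r j) 1) = 0 := by
      rw [← map_smul, ← Pi.single_smul, ← map_one (Ideal.Quotient.mk _), ← Ideal.Quotient.mk_eq_mk,
        ← Submodule.Quotient.mk_smul, (Submodule.Quotient.mk_eq_zero _).2, Pi.single_zero, map_zero]
      simpa using hI hj hq
    rw [← Function.update_eq_self j fun j => e.symm (Pi.single (r j) 1),
      ← AlternatingMap.map_update_smul, hzero, AlternatingMap.map_update_zero]
  · obtain ⟨i, j, hij, hne⟩ := Function.not_injective_iff.1 hinj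
    rw [AlternatingMap.map_eq_zero_of_eq _ _ (by rw [hij]) hne, smul_zero]

theorem annihilator_exteriorPower_le (hI : Monotone I) (e : M ≃ₗ[R] (∀ i, R ⧸ I i)) (k : Fin N) :
    Module.annihilator R (⋀[R]^(k + 1) M) ≤ I k := by
  intro q hq
  let ι : Fin (k + 1) → Fin N := Fin.castLE k.2
  have hι : ∀ j, I (ι j) ≤ I k := fun j => hI (Nat.lt_succ_iff.1 j.2)
  let f : M →ₗ[R] (Fin (k + 1) → R ⧸ I k) :=
    LinearMap.pi fun j => Submodule.factor (hι j) ∘ₗ LinearMap.proj (ι j) ∘ₗ e.toLinearMap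
  -- The determinant of the first `k + 1` coordinates modulo `I k` detects the wedge of the
  -- corresponding standard generators, on which it is `1`.
  let δ : M [⋀^Fin (k + 1)]→ₗ[R] (R ⧸ I k) :=
    (alternatingMapRestrictScalars R Matrix.detRowAlternating).compLinearMap f
  let v : Fin (k + 1) → M := fun j => e.symm (Pi.single (ι j) 1)
  have hfv : f ∘ v = (1 : Matrix (Fin (k + 1)) (Fin (k + 1)) (R ⧸ I k)) := by
    funext i j
    change Submodule.factor (hι j) (e (e.symm (Pi.single (ι i) 1)) (ι j)) = _
    rw [LinearEquiv.apply_symm_apply]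
    obtain rfl | hij := eq_or_ne i j
    · rw [Pi.single_eq_same, Matrix.one_apply_eq]
      rfl
    · rw [Pi.single_eq_of_ne ((Fin.castLE_injective _).ne hij.symm), map_zero,
        Matrix.one_apply_ne hij]
  have hδ : δ v = 1 := by
    change Matrix.det (f ∘ v) = 1
    rw [hfv, Matrix.det_one]
  have hqv := congrArg (exteriorPower.alternatingMapLinearEquiv δ)
    (Module.mem_annihilator.1 hq (exteriorPower.ιMulti R _ v))
  rw [map_smul, exteriorPower.alternatingMapLinearEquiv_apply_ιMulti, hδ, map_zero] at hqv
  rwa [Algebra.smul_def, mul_one, Ideal.Quotient.algebraMap_eq, Ideal.Quotient.eq_zero_iff_mem]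
    at hqv

theorem annihilator_exteriorPower_eq (hI : Monotone I) (e : M ≃ₗ[R] (∀ i, R ⧸ I i)) (k : Fin N) :
    Module.annihilator R (⋀[R]^(k + 1) M) = I k :=
  (annihilator_exteriorPower_le hI e k).antisymm (le_annihilator_exteriorPower hI e k)

end ExteriorPower

section BaseChange

variable (R S W : Type*) [CommRing R] [CommRing S] [Algebra R S] [AddCommGroup W] [Module R W]

theorem ι_baseChange_mul_add_swap (x y : S ⊗[R] W) :
    (ExteriorAlgebra.ι R).baseChange S x * (ExteriorAlgebra.ι R).baseChange S y +
      (ExteriorAlgebra.ι R).baseChange S y * (ExteriorAlgebra.ι R).baseChange S x = 0 := by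
  induction x with
  | zero => simp
  | add x x' hx hx' => rw [map_add, add_mul, mul_add, add_add_add_comm, hx, hx', add_zero]
  | tmul s w =>
    induction y with
    | zero => simp
    | add y y' hy hy' => rw [map_add, add_mul, mul_add, add_add_add_comm, hy, hy', add_zero]
    | tmul t z => simp [mul_comm t s, ← TensorProduct.tmul_add, ExteriorAlgebra.ι_add_mul_swap]

theorem ι_baseChange_mul_self (x : S ⊗[R] W) :
    (ExteriorAlgebra.ι R).baseChange S x * (ExteriorAlgebra.ι R).baseChange S x = 0 := by
  induction x with
  | zero => simp
  | add x y hx hy =>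
    rw [map_add, add_mul, mul_add, mul_add, hx, hy, zero_add, add_zero, ι_baseChange_mul_add_swap]
  | tmul s w => simp

/-- The comparison map `⋀ (S ⊗ W) → S ⊗ ⋀ W` of exterior algebras, which detects the vanishing in
`⋀ (S ⊗ W)` of multiples of wedges of elements `1 ⊗ w`. -/
noncomputable def exteriorAlgebraBaseChange :
    ExteriorAlgebra S (S ⊗[R] W) →ₐ[S] S ⊗[R] ExteriorAlgebra R W :=
  ExteriorAlgebra.lift S ⟨(ExteriorAlgebra.ι R).baseChange S, ι_baseChange_mul_self R S W⟩

variable {R S W}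

theorem exteriorAlgebraBaseChange_ιMulti {n : ℕ} (w : Fin n → W) :
    exteriorAlgebraBaseChange R S W (ExteriorAlgebra.ιMulti S n fun i => 1 ⊗ₜ w i) =
      1 ⊗ₜ ExteriorAlgebra.ιMulti R n w := by
  rw [← Algebra.TensorProduct.includeRight_apply, ExteriorAlgebra.ιMulti_apply,
    ExteriorAlgebra.ιMulti_apply, map_list_prod, map_list_prod, List.map_ofFn, List.map_ofFn]
  congr 2
  ext i
  simp [exteriorAlgebraBaseChange]

theorem span_range_one_tmul :
    Submodule.span S (Set.range fun w : W => (1 : S) ⊗ₜ[R] w) = ⊤ := by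
  rw [← Submodule.baseChange_top, Submodule.baseChange_eq_span, Submodule.map_top]
  rfl

theorem map_annihilator_exteriorPower_le (n : ℕ) :
    (Module.annihilator R (⋀[R]^n W)).map (algebraMap R S) ≤
      Module.annihilator S (⋀[S]^n (S ⊗[R] W)) := by
  refine Ideal.map_le_iff_le_comap.2 fun r hr => ?_
  rw [Ideal.mem_comap, mem_annihilator_exteriorPower_iff span_range_one_tmul]
  intro v hv
  choose w hw using hv
  let f : W [⋀^Fin n]→ₗ[R] ⋀[S]^n (S ⊗[R] W) :=
    (alternatingMapRestrictScalars R (exteriorPower.ιMulti S n)).compLinearMap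
      (TensorProduct.mk R S W 1)
  have hf : f w = exteriorPower.ιMulti S n v := congrArg (exteriorPower.ιMulti S n) (funext hw)
  rw [← hf, algebraMap_smul, ← exteriorPower.alternatingMapLinearEquiv_apply_ιMulti f, ← map_smul,
    Module.mem_annihilator.1 hr, map_zero]

theorem tmul_ιMulti_eq_zero_of_mem_annihilator {n : ℕ} {q : S}
    (hq : q ∈ Module.annihilator S (⋀[S]^n (S ⊗[R] W))) (w : Fin n → W) :
    q ⊗ₜ[R] ExteriorAlgebra.ιMulti R n w = 0 := by
  have h := congrArg (exteriorAlgebraBaseChange R S W) (congrArg Subtype.val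
    (Module.mem_annihilator.1 hq (exteriorPower.ιMulti S n fun i => 1 ⊗ₜ w i)))
  simpa [exteriorAlgebraBaseChange_ιMulti, TensorProduct.smul_tmul'] using h

theorem annihilator_exteriorPower_baseChange [Module.Free R S] (n : ℕ) :
    Module.annihilator S (⋀[S]^n (S ⊗[R] W)) =
      (Module.annihilator R (⋀[R]^n W)).map (algebraMap R S) := by
  refine le_antisymm (fun q hq => ?_) (map_annihilator_exteriorPower_le n)
  let b := Module.Free.chooseBasis R S
  have hcoord (j) : b.repr q j ∈ Module.annihilator R (⋀[R]^n W) := by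
    rw [mem_annihilator_exteriorPower_iff Submodule.span_univ]
    intro w _
    have hj := congrArg (TensorProduct.lid R _ ∘ (b.coord j).rTensor (ExteriorAlgebra R W))
      (tmul_ιMulti_eq_zero_of_mem_annihilator hq w)
    ext
    simpa using hj
  rw [← b.linearCombination_repr q, Finsupp.linearCombination_apply]
  refine Ideal.sum_mem _ fun j _ => ?_
  change b.repr q j • b j ∈ _
  rw [Algebra.smul_def]
  exact Ideal.mul_mem_right _ _ (Ideal.mem_map_of_mem _ (hcoord j))

theorem eq_map_annihilator_of_baseChange_equiv_pi_quotient [Module.Free R S] {N : ℕ}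
    {I : Fin N → Ideal S} (hI : Monotone I) (e : S ⊗[R] W ≃ₗ[S] ∀ i, S ⧸ I i) (k : Fin N) :
    I k = (Module.annihilator R (⋀[R]^(k + 1) W)).map (algebraMap R S) := by
  rw [← annihilator_exteriorPower_baseChange, annihilator_exteriorPower_eq hI e]

end BaseChange

section InvariantFactors

variable {F : Type*} [Field F]

theorem exists_basis_toMatrix_lsmul_X_eq_companion {p : F[X]} (hp : p.Monic) :
    ∃ b : Module.Basis (Fin p.natDegree) F (F[X] ⧸ Ideal.span {p}),
      LinearMap.toMatrix b b (Algebra.lsmul F F _ (X : F[X])) = companion p.natDegree p := by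
  have hmin : (AdjoinRoot.powerBasis' hp).minpolyGen = p := by
    rw [PowerBasis.minpolyGen_eq, AdjoinRoot.powerBasis'_gen, AdjoinRoot.minpoly_root hp.ne_zero,
      hp.leadingCoeff, inv_one, C_1, mul_one]
  refine ⟨(AdjoinRoot.powerBasis' hp).basis, ?_⟩
  refine (AdjoinRoot.powerBasis' hp).leftMulMatrix.trans ?_
  rw [hmin]
  ext i j
  have hlast : (j : ℕ) + 1 = (AdjoinRoot.powerBasis' hp).dim ↔ (j : ℕ) = p.natDegree - 1 := by
    have := j.2
    have := AdjoinRoot.powerBasis'_dim hp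
    omega
  simp only [Matrix.of_apply, companion, hlast]

theorem toMatrix_piBasis_lsmul {R A ι : Type*} [CommSemiring R] [Semiring A] [Algebra R A]
    [Fintype ι] [DecidableEq ι] {κ M : ι → Type*} [∀ i, Fintype (κ i)]
    [∀ i, DecidableEq (κ i)] [∀ i, AddCommMonoid (M i)] [∀ i, Module R (M i)]
    [∀ i, Module A (M i)] [∀ i, IsScalarTower R A (M i)]
    (b : ∀ i, Module.Basis (κ i) R (M i)) (a : A) :
    LinearMap.toMatrix (Pi.basis b) (Pi.basis b) (Algebra.lsmul R R (∀ i, M i) a) =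
      Matrix.blockDiagonal' fun i =>
        LinearMap.toMatrix (b i) (b i) (Algebra.lsmul R R (M i) a) := by
  ext ⟨i, x⟩ ⟨j, y⟩
  rw [LinearMap.toMatrix_apply, Pi.basis_repr, Pi.basis_apply]
  change (b i).repr (a • Pi.single j (b j y) i) x = _
  obtain rfl | hij := eq_or_ne i j
  · rw [Matrix.blockDiagonal'_apply_eq, Pi.single_eq_same, LinearMap.toMatrix_apply,
      Algebra.lsmul_coe]
  · rw [Matrix.blockDiagonal'_apply_ne _ _ _ hij, Pi.single_eq_of_ne hij, smul_zero, map_zero,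
      Finsupp.zero_apply]

theorem IsInvFactors.nonempty_linearEquiv_pi_quotient {m : Type*} [Fintype m]
    [DecidableEq m] {A : Matrix m m F} {l : List F[X]} (h : IsInvFactors A l) :
    Nonempty (Module.AEval' (Matrix.toLin' A) ≃ₗ[F[X]]
      ∀ i : Fin l.length, F[X] ⧸ Ideal.span {l.get i}) := by
  obtain ⟨hmonic, -, e, P, hA⟩ := h
  choose b hb using fun i => exists_basis_toMatrix_lsmul_X_eq_companion (hmonic _ (l.get_mem i))
  let B := (Pi.basis b).reindex e.symm
  have hB : LinearMap.toMatrix B B (Algebra.lsmul F F _ (X : F[X])) = Matrix.reindex e.symm e.symm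
      (Matrix.blockDiagonal' fun i => companion (l.get i).natDegree (l.get i)) := by
    simp_rw [← hb, ← toMatrix_piBasis_lsmul]
    ext i j
    simp [LinearMap.toMatrix_apply, B]
  let c : (m → F) ≃ₗ[F] (∀ i : Fin l.length, F[X] ⧸ Ideal.span {l.get i}) :=
    (Matrix.toLin'OfInv P.mul_inv P.inv_mul).trans B.equivFun.symm
  have hc (v) : B.equivFun (c v) = (↑P⁻¹ : Matrix m m F).mulVec v :=
    B.equivFun.apply_symm_apply _
  refine ⟨LinearEquiv.ofAEval _ c fun v => B.equivFun.injective ?_⟩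
  calc B.equivFun (c (Matrix.toLin' A v))
      = ((↑P⁻¹ : Matrix m m F) * A).mulVec v := by
        rw [hc, Matrix.toLin'_apply, Matrix.mulVec_mulVec]
    _ = (LinearMap.toMatrix B B (Algebra.lsmul F F _ (X : F[X]))).mulVec (B.equivFun (c v)) := by
        rw [hB, hc, Matrix.mulVec_mulVec, hA, mul_assoc, Units.inv_mul_cancel_left]
    _ = B.equivFun ((X : F[X]) • c v) := LinearMap.toMatrix_mulVec_repr B B _ (c v)

theorem IsInvFactors.monotone_span_get {m : Type*} [Fintype m] [DecidableEq m]
    {A : Matrix m m F} {l : List F[X]} (h : IsInvFactors A l) :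
    Monotone fun i : Fin l.length => Ideal.span {l.get i} := by
  intro i j hij
  rw [Ideal.span_singleton_le_span_singleton]
  obtain rfl | hlt := hij.eq_or_lt
  · exact dvd_rfl
  · have : IsTrans F[X] fun a b => b ∣ a := ⟨fun _ _ _ hba hcb => hcb.trans hba⟩
    exact List.pairwise_iff_get.1 (List.isChain_iff_pairwise.1 h.2.1) i j hlt

end InvariantFactors

section EvenPolynomials

variable (R : Type*) [CommRing R]

/-- The subalgebra `R[X²]` of `R[X]`, encoded as the range of `p(X) ↦ p(X²)`. -/
noncomputable def evenSubalgebra : Subalgebra R R[X] := (expand R 2).range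

variable {R}

theorem mem_evenSubalgebra {p : R[X]} : p ∈ evenSubalgebra R ↔ ∃ q, expand R 2 q = p :=
  Iff.rfl

theorem X_sq_mem_evenSubalgebra : (X ^ 2 : R[X]) ∈ evenSubalgebra R :=
  ⟨X, expand_X 2⟩

theorem eq_expand_add_X_mul_expand (p : R[X]) :
    p = expand R 2 (contract 2 p) + X * expand R 2 (contract 2 (divX p)) := by
  ext n
  obtain ⟨k, rfl | rfl⟩ := n.even_or_odd'
  · rcases k with _ | k
    · simp [coeff_expand, coeff_contract]
    · have hodd : ¬ 2 ∣ 2 * k + 1 := by omega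
      rw [coeff_add, show 2 * (k + 1) = 2 * k + 1 + 1 by ring, coeff_X_mul,
        coeff_expand two_pos _ (2 * k + 1), if_neg hodd, add_zero,
        show 2 * k + 1 + 1 = (k + 1) * 2 by ring, coeff_expand_mul two_pos,
        coeff_contract two_ne_zero]
  · rw [coeff_add, coeff_X_mul, mul_comm 2, coeff_expand_mul two_pos,
      coeff_contract two_ne_zero, coeff_divX, coeff_expand two_pos, if_neg (by omega), zero_add]

theorem eq_zero_of_expand_add_X_mul_expand_eq_zero {a b : R[X]}
    (h : expand R 2 a + X * expand R 2 b = 0) : a = 0 ∧ b = 0 := by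
  have hb : b = 0 := by
    ext n
    have hodd : ¬ 2 ∣ n * 2 + 1 := by omega
    have hcoeff := congrArg (coeff · (n * 2 + 1)) h
    rwa [coeff_add, coeff_X_mul, coeff_expand_mul two_pos, coeff_expand two_pos, if_neg hodd,
      zero_add] at hcoeff
  rw [hb, map_zero, mul_zero, add_zero, expand_eq_zero two_pos] at h
  exact ⟨h, hb⟩

instance free_evenSubalgebra : Module.Free (evenSubalgebra R) R[X] := by
  have hli : LinearIndependent (evenSubalgebra R) ![1, (X : R[X])] := by
    rw [LinearIndependent.pair_iff]
    intro ⟨_, a, rfl⟩ ⟨_, b, rfl⟩ h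
    obtain ⟨rfl, rfl⟩ := eq_zero_of_expand_add_X_mul_expand_eq_zero (a := a) (b := b)
      (by simpa [Subalgebra.smul_def, mul_comm X] using h)
    exact ⟨Subtype.ext (map_zero _), Subtype.ext (map_zero _)⟩
  refine .of_basis (.mk hli fun p _ => ?_)
  rw [Matrix.range_cons_cons_empty, Submodule.mem_span_pair]
  refine ⟨⟨_, contract 2 p, rfl⟩, ⟨_, contract 2 (divX p), rfl⟩, ?_⟩
  simpa [Subalgebra.smul_def, mul_comm X] using (eq_expand_add_X_mul_expand p).symm

theorem mem_evenSubalgebra_of_span_eq_map {F : Type*} [Field F] {p : F[X]}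
    {I : Ideal (evenSubalgebra F)}
    (h : Ideal.span {p} = I.map (algebraMap (evenSubalgebra F) F[X])) : p ∈ evenSubalgebra F := by
  let ρ : F[X] →+* evenSubalgebra F := (expand F 2).rangeRestrict.toRingHom
  have hρ : Function.Surjective ρ := (expand F 2).rangeRestrict_surjective
  obtain ⟨f, hf⟩ := (IsPrincipalIdealRing.principal (I.comap ρ)).principal
  have hspan : Ideal.span {p} = Ideal.span {expand F 2 f} := by
    rw [h, ← Ideal.map_comap_of_surjective ρ hρ I, Ideal.map_map, hf,
      Ideal.submodule_span_eq, Ideal.map_span, Set.image_singleton]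
    rfl
  obtain ⟨u, hu⟩ := (Ideal.span_singleton_eq_span_singleton.1 hspan).symm
  obtain ⟨c, -, hc⟩ := Polynomial.isUnit_iff.1 u.isUnit
  rw [← hu, ← hc]
  exact mul_mem ⟨f, rfl⟩ ((evenSubalgebra F).algebraMap_mem c)

end EvenPolynomials

section BlockSquareRoot

variable {R U : Type*} [CommRing R] [AddCommGroup U] [Module R U]

/-- The endomorphism `(x, y) ↦ (T y, x)` of `U × U`, the coordinate-free form of the block matrix
`[[0, M], [I, 0]]`; its square is `T × T`. -/
def sqrtBlock (T : Module.End R U) : Module.End R (U × U) :=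
  (T ∘ₗ LinearMap.snd R U U).prod (LinearMap.fst R U U)

theorem X_smul_of_sqrtBlock (T : Module.End R U) (x y : U) :
    (X : R[X]) • Module.AEval'.of (sqrtBlock T) (x, y) = Module.AEval'.of (sqrtBlock T) (T y, x) :=
  Module.AEval'.X_smul_of _ _

/-- The `R[X²]`-submodule spanned by `U × 0` in `U × U`, where `X` acts as `sqrtBlock T`. It is the
`R[X²]`-form from which the whole `R[X]`-module arises by extension of scalars. -/
noncomputable abbrev evenPart (T : Module.End R U) :
    Submodule (evenSubalgebra R) (Module.AEval' (sqrtBlock T)) :=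
  .span _ (Set.range fun u => Module.AEval'.of (sqrtBlock T) (u, 0))

namespace evenPart

variable (T : Module.End R U)

/-- The map `u ↦ (u, 0)` from `U` to `evenPart T`. -/
noncomputable def of : U →ₗ[R] evenPart T :=
  ((Module.AEval'.of (sqrtBlock T)).toLinearMap ∘ₗ LinearMap.inl R U U).codRestrict
    ((evenPart T).restrictScalars R) fun u => Submodule.subset_span ⟨u, rfl⟩

theorem span_range_of : Submodule.span (evenSubalgebra R) (Set.range (of T)) = ⊤ := by
  rw [← Submodule.span_span_coe_preimage]
  congr 1
  ext w
  exact exists_congr fun u => Subtype.ext_iff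

theorem of_apply_eq_X_sq_smul_of (u : U) :
    of T (T u) = (⟨X ^ 2, X_sq_mem_evenSubalgebra⟩ : evenSubalgebra R) • of T u := by
  refine Subtype.ext ?_
  change Module.AEval'.of (sqrtBlock T) (T u, 0) =
    (X ^ 2 : R[X]) • Module.AEval'.of (sqrtBlock T) (u, 0)
  rw [pow_two, mul_smul, X_smul_of_sqrtBlock, map_zero, X_smul_of_sqrtBlock]

theorem one_tmul_of_apply (u : U) :
    (1 : R[X]) ⊗ₜ[evenSubalgebra R] of T (T u) = (X * X : R[X]) ⊗ₜ of T u := by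
  rw [of_apply_eq_X_sq_smul_of, ← TensorProduct.smul_tmul, Subalgebra.smul_def, smul_eq_mul,
    mul_one, ← pow_two]

/-- The map `(x, y) ↦ 1 ⊗ x + X ⊗ y`, the inverse of `R[X] ⊗ evenPart T → U × U`. -/
noncomputable def toBaseChange :
    Module.AEval' (sqrtBlock T) →ₗ[R[X]] R[X] ⊗[evenSubalgebra R] evenPart T :=
  LinearMap.ofAEval (sqrtBlock T)
    (LinearMap.coprod
      ((TensorProduct.mk (evenSubalgebra R) R[X] (evenPart T) 1).restrictScalars R ∘ₗ of T)
      ((TensorProduct.mk (evenSubalgebra R) R[X] (evenPart T) X).restrictScalars R ∘ₗ of T))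
    fun v => by
      change (1 : R[X]) ⊗ₜ of T (T v.2) + (X : R[X]) ⊗ₜ of T v.1 =
        (X : R[X]) • ((1 : R[X]) ⊗ₜ of T v.1 + (X : R[X]) ⊗ₜ of T v.2)
      rw [one_tmul_of_apply, smul_add, TensorProduct.smul_tmul', TensorProduct.smul_tmul',
        smul_eq_mul, smul_eq_mul, mul_one, add_comm]

theorem toBaseChange_of (x y : U) :
    toBaseChange T (Module.AEval'.of (sqrtBlock T) (x, y)) =
      1 ⊗ₜ of T x + (X : R[X]) ⊗ₜ of T y :=
  rfl

theorem liftBaseChange_comp_toBaseChange :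
    (evenPart T).subtype.liftBaseChange R[X] ∘ₗ toBaseChange T = LinearMap.id := by
  ext v
  obtain ⟨⟨x, y⟩, rfl⟩ := (Module.AEval'.of (sqrtBlock T)).surjective v
  rw [LinearMap.comp_apply, toBaseChange_of, map_add, LinearMap.liftBaseChange_tmul,
    LinearMap.liftBaseChange_tmul, one_smul]
  change Module.AEval'.of (sqrtBlock T) (x, 0) +
    (X : R[X]) • Module.AEval'.of (sqrtBlock T) (y, 0) = _
  rw [X_smul_of_sqrtBlock, map_zero, ← map_add, Prod.mk_add_mk, add_zero, zero_add,
    LinearMap.id_apply]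

theorem toBaseChange_comp_liftBaseChange :
    toBaseChange T ∘ₗ (evenPart T).subtype.liftBaseChange R[X] = LinearMap.id := by
  refine TensorProduct.AlgebraTensorModule.curry_injective ?_
  ext1
  refine LinearMap.ext_on_range (span_range_of T) fun u => ?_
  change toBaseChange T ((1 : R[X]) • Module.AEval'.of (sqrtBlock T) (u, 0)) = 1 ⊗ₜ of T u
  rw [one_smul, toBaseChange_of, map_zero, TensorProduct.tmul_zero, add_zero]

/-- Extending the scalars of `evenPart T` from `R[X²]` to `R[X]` gives back `U × U`. -/
noncomputable def baseChangeEquiv :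
    R[X] ⊗[evenSubalgebra R] evenPart T ≃ₗ[R[X]] Module.AEval' (sqrtBlock T) :=
  .ofLinearMap ((evenPart T).subtype.liftBaseChange R[X]) (toBaseChange T)
    (liftBaseChange_comp_toBaseChange T) (toBaseChange_comp_liftBaseChange T)

end evenPart

end BlockSquareRoot

theorem nonempty_linearEquiv_fromBlocks {R m : Type*} [CommRing R] [Fintype m] [DecidableEq m]
    (M : Matrix m m R) :
    Nonempty (Module.AEval' (sqrtBlock (Matrix.toLin' M)) ≃ₗ[R[X]]
      Module.AEval' (Matrix.toLin' (Matrix.fromBlocks 0 M 1 0))) := by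
  let c : ((m → R) × (m → R)) ≃ₗ[R] (m ⊕ m → R) :=
    (LinearEquiv.sumArrowLequivProdArrow m m R R).symm
  refine ⟨.ofAEval _ (c.trans (Module.AEval'.of _)) fun v => ?_⟩
  change Module.AEval'.of _ (c (Matrix.toLin' M v.2, v.1)) = X • Module.AEval'.of _ (c v)
  have hcl : c v ∘ Sum.inl = v.1 := rfl
  have hcr : c v ∘ Sum.inr = v.2 := rfl
  rw [Module.AEval'.X_smul_of, Matrix.toLin'_apply, Matrix.toLin'_apply, Matrix.fromBlocks_mulVec,
    hcl, hcr, Matrix.zero_mulVec, Matrix.zero_mulVec, Matrix.one_mulVec, zero_add, add_zero]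
  rfl

theorem invFactors_block_even_general {F m : Type*} [Field F] [Fintype m] [DecidableEq m]
    (M : Matrix m m F) (l : List F[X])
    (hl : IsInvFactors (Matrix.fromBlocks 0 M 1 (0 : Matrix m m F)) l) :
    ∀ p ∈ l, ∃ q : F[X], p = q.comp (X ^ 2) := by
  intro p hp
  obtain ⟨k, rfl⟩ := List.get_of_mem hp
  obtain ⟨toBlock⟩ := nonempty_linearEquiv_fromBlocks M
  obtain ⟨toQuotients⟩ := hl.nonempty_linearEquiv_pi_quotient
  let e : F[X] ⊗[evenSubalgebra F] evenPart (Matrix.toLin' M) ≃ₗ[F[X]]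
      ∀ i : Fin l.length, F[X] ⧸ Ideal.span {l.get i} :=
    (evenPart.baseChangeEquiv _).trans (toBlock.trans toQuotients)
  have hspan := eq_map_annihilator_of_baseChange_equiv_pi_quotient (R := evenSubalgebra F)
    (W := evenPart (Matrix.toLin' M)) hl.monotone_span_get e k
  obtain ⟨q, hq⟩ := mem_evenSubalgebra.1 (mem_evenSubalgebra_of_span_eq_map hspan)
  exact ⟨q, by rw [← hq, expand_eq_comp_X_pow]⟩

/-- All invariant factors of the block matrix `[[0, M], [I, 0]]` are even
polynomials, i.e. polynomials in `t²`. -/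
theorem invFactors_block_even (F : Type*) [Field F] (n : ℕ)
    (M : Matrix (Fin n) (Fin n) F) (l : List (Polynomial F))
    (hl : IsInvFactors
      (Matrix.fromBlocks 0 M 1 (0 : Matrix (Fin n) (Fin n) F)) l) :
    ∀ p ∈ l, ∃ q : Polynomial F, p = q.comp (X ^ 2) :=
  invFactors_block_even_general M l hl
end
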